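/- arXiv:1903.00813 — 5 statements merged into one kernel-verified Lean document; each statement's English description precedes it below -/
import Mathlib

section
/- Fix integers d ≥ 1 and p ≥ 2, and let s > 0 be the smallest positive real number with q_{d,p}'(s) = 0. Then the growth-rate limit G_{d,p} = lim_{m→∞} C_{d,p}((m+1)(p−1)+1) / C_{d,p}(m(p−1)+1) exists and equals 1 / q_{d,p}(s)^{p−1}. -/
open Filter

/-!
Put `a = p - 1` and write `q z = z * Q (z ^ a)`. Lagrange inversion gives
`(m a + 1) [x ^ (m a + 1)] y = [w ^ m] Q ^ (-(m a + 1))`, an integral over a circle `|w| = r` of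
`Q⁻¹ F ^ (-m)`, where `F w = w * Q w ^ a`. Since `q z ^ a = F (z ^ a)`, the critical point `s` of
`q` makes `r = s ^ a` a critical point of `F`.

The coefficients of `Q⁻¹` are positive: they satisfy a recurrence whose right-hand side is an
alternating sum, with terms decreasing in absolute value because the coefficients already grow at
least like powers of `(d + 1) / 2`. Hence the zero of `Q` of least modulus is positive, and as `q`
increases up to `s` it lies beyond `r`; and on the circle `|w| = r` the modulus of `Q⁻¹` peaks only
at `w = r`. Laplace's method at this saddle point shows that the integral is `F r ^ (-m)` times a
sequence asymptotic to `κ / √m` with `κ ≠ 0`, so consecutive ratios tend to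
`1 / F r = 1 / q s ^ a`.
-/

section Laplace

open scoped Topology
open MeasureTheory

theorem tendsto_sqrt_natCast_atTop : Tendsto (fun m : ℕ ↦ √(m : ℝ)) atTop atTop :=
  Real.tendsto_sqrt_atTop.comp tendsto_natCast_atTop_atTop

theorem tendsto_div_sqrt_natCast (t : ℝ) :
    Tendsto (fun m : ℕ ↦ t / √(m : ℝ)) atTop (𝓝 0) :=
  tendsto_sqrt_natCast_atTop.const_div_atTop t

theorem sq_div_sqrt_natCast (t : ℝ) (m : ℕ) : (t / √(m : ℝ)) ^ 2 = t ^ 2 / m := by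
  rw [div_pow, Real.sq_sqrt m.cast_nonneg]

theorem integral_indicator_Ioc_comp_div {E : Type*} [NormedAddCommGroup E] [NormedSpace ℝ E]
    (f : ℝ → E) {a b c : ℝ} (hab : a ≤ b) (hc : 0 < c) :
    ∫ t, (Set.Ioc (a * c) (b * c)).indicator (fun t ↦ f (t / c)) t = c • ∫ x in a..b, f x := by
  rw [integral_indicator measurableSet_Ioc,
    ← intervalIntegral.integral_of_le (mul_le_mul_of_nonneg_right hab hc.le),
    intervalIntegral.integral_comp_div f hc.ne', mul_div_cancel_right₀ _ hc.ne',
    mul_div_cancel_right₀ _ hc.ne']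

theorem tendsto_pow_comp_div_sqrt {g : ℝ → ℂ} {c : ℂ} (hg0 : g 0 = 1)
    (hc : Tendsto (fun θ : ℝ ↦ (g θ - 1) / (θ : ℂ) ^ 2) (𝓝[≠] 0) (𝓝 (-c))) (t : ℝ) :
    Tendsto (fun m : ℕ ↦ g (t / √(m : ℝ)) ^ m) atTop (𝓝 (Complex.exp (-c * (t : ℂ) ^ 2))) := by
  rcases eq_or_ne t 0 with rfl | ht
  · simp [hg0]
  have hne : Tendsto (fun m : ℕ ↦ t / √(m : ℝ)) atTop (𝓝[≠] 0) := by
    refine tendsto_nhdsWithin_iff.2 ⟨tendsto_div_sqrt_natCast t, ?_⟩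
    filter_upwards [tendsto_sqrt_natCast_atTop.eventually_gt_atTop 0] with m hm
    exact div_ne_zero ht hm.ne'
  have hlin : Tendsto (fun m : ℕ ↦ (m : ℂ) * (g (t / √(m : ℝ)) - 1)) atTop
      (𝓝 (-c * (t : ℂ) ^ 2)) := by
    refine ((hc.comp hne).mul_const ((t : ℂ) ^ 2)).congr' ?_
    filter_upwards [eventually_gt_atTop 0] with m hm
    have hsq : ((t / √(m : ℝ) : ℝ) : ℂ) ^ 2 = (t : ℂ) ^ 2 / m := by
      exact_mod_cast sq_div_sqrt_natCast t m
    have hm' : (m : ℂ) ≠ 0 := Nat.cast_ne_zero.2 hm.ne'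
    have ht' : (t : ℂ) ≠ 0 := Complex.ofReal_ne_zero.2 ht
    simp only [Function.comp_apply, hsq]
    field_simp
  simpa using Complex.tendsto_one_add_pow_exp_of_tendsto hlin

variable {g h : ℝ → ℂ} {b ε : ℝ}

theorem norm_pow_comp_div_sqrt_le (hb : ∀ θ : ℝ, |θ| ≤ b → ‖g θ‖ ≤ Real.exp (-ε * θ ^ 2))
    {t : ℝ} {m : ℕ} (hm : 0 < m) (ht : |t / √(m : ℝ)| ≤ b) :
    ‖g (t / √(m : ℝ)) ^ m‖ ≤ Real.exp (-ε * t ^ 2) := by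
  have hm' : (m : ℝ) ≠ 0 := Nat.cast_ne_zero.2 hm.ne'
  calc ‖g (t / √(m : ℝ)) ^ m‖ = ‖g (t / √(m : ℝ))‖ ^ m := norm_pow _ _
    _ ≤ Real.exp (-ε * (t / √(m : ℝ)) ^ 2) ^ m := by gcongr; exact hb _ ht
    _ = Real.exp (-ε * t ^ 2) := by
      rw [← Real.exp_nat_mul, sq_div_sqrt_natCast]
      congr 1
      field_simp

theorem eventually_abs_div_sqrt_lt (hb0 : 0 < b) (t : ℝ) :
    ∀ᶠ m : ℕ in atTop, |t / √(m : ℝ)| < b := by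
  have := (tendsto_div_sqrt_natCast t).abs
  rw [abs_zero] at this
  exact this.eventually_lt_const hb0

theorem le_re_of_norm_le_exp_neg_mul_sq (hb0 : 0 < b)
    (hb : ∀ θ : ℝ, |θ| ≤ b → ‖g θ‖ ≤ Real.exp (-ε * θ ^ 2)) {c : ℂ} (hg0 : g 0 = 1)
    (hc : Tendsto (fun θ : ℝ ↦ (g θ - 1) / (θ : ℂ) ^ 2) (𝓝[≠] 0) (𝓝 (-c))) : ε ≤ c.re := by
  have hle : ‖Complex.exp (-c * ((1 : ℝ) : ℂ) ^ 2)‖ ≤ Real.exp (-ε * 1 ^ 2) := by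
    refine le_of_tendsto (tendsto_pow_comp_div_sqrt hg0 hc 1).norm ?_
    filter_upwards [eventually_gt_atTop 0, eventually_abs_div_sqrt_lt hb0 1] with m hm hm'
    exact norm_pow_comp_div_sqrt_le hb hm hm'.le
  simpa [Complex.norm_exp] using hle

theorem norm_indicator_Ioc_mul_pow_le (hb : ∀ θ : ℝ, |θ| ≤ b → ‖g θ‖ ≤ Real.exp (-ε * θ ^ 2))
    {M : ℝ} (hM0 : 0 ≤ M) (hM : ∀ θ ∈ Set.Icc (-b) b, ‖h θ‖ ≤ M) {m : ℕ} (hm : 0 < m) (t : ℝ) :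
    ‖(Set.Ioc (-b * √(m : ℝ)) (b * √(m : ℝ))).indicator
      (fun t ↦ h (t / √(m : ℝ)) * g (t / √(m : ℝ)) ^ m) t‖ ≤ M * Real.exp (-ε * t ^ 2) := by
  have hs : 0 < √(m : ℝ) := Real.sqrt_pos.2 (Nat.cast_pos.2 hm)
  rw [Set.indicator_apply]
  split_ifs with ht
  · have hlo : -b ≤ t / √(m : ℝ) := (le_div_iff₀ hs).2 ht.1.le
    have hhi : t / √(m : ℝ) ≤ b := (div_le_iff₀ hs).2 ht.2
    rw [norm_mul]
    exact mul_le_mul (hM _ ⟨hlo, hhi⟩) (norm_pow_comp_div_sqrt_le hb hm (abs_le.2 ⟨hlo, hhi⟩))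
      (norm_nonneg _) hM0
  · rw [norm_zero]
    positivity

/- After the substitution `θ = t / √m` the integrands are dominated by a multiple of
`exp (-ε t²)` and converge pointwise to `h 0 * exp (-c t²)`. -/
theorem tendsto_sqrt_mul_integral_mul_pow (hg : Continuous g) (hh : Continuous h) (hb0 : 0 < b)
    (hε : 0 < ε) (hb : ∀ θ : ℝ, |θ| ≤ b → ‖g θ‖ ≤ Real.exp (-ε * θ ^ 2)) {c : ℂ} (hg0 : g 0 = 1)
    (hc : Tendsto (fun θ : ℝ ↦ (g θ - 1) / (θ : ℂ) ^ 2) (𝓝[≠] 0) (𝓝 (-c))) :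
    Tendsto (fun m : ℕ ↦ √(m : ℝ) • ∫ θ in -b..b, h θ * g θ ^ m) atTop
      (𝓝 (h 0 * (Real.pi / c) ^ (1 / 2 : ℂ))) := by
  rw [← integral_gaussian_complex (hε.trans_le (le_re_of_norm_le_exp_neg_mul_sq hb0 hb hg0 hc)),
    ← integral_const_mul]
  have hscale : (fun m : ℕ ↦ ∫ t, (Set.Ioc (-b * √(m : ℝ)) (b * √(m : ℝ))).indicator
      (fun t ↦ h (t / √(m : ℝ)) * g (t / √(m : ℝ)) ^ m) t) =ᶠ[atTop]
        fun m ↦ √(m : ℝ) • ∫ θ in -b..b, h θ * g θ ^ m := by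
    filter_upwards [tendsto_sqrt_natCast_atTop.eventually_gt_atTop 0] with m hm
    exact integral_indicator_Ioc_comp_div (fun θ ↦ h θ * g θ ^ m) (by linarith) hm
  refine Tendsto.congr' hscale ?_
  obtain ⟨M, hM⟩ := (isCompact_Icc (a := -b) (b := b)).exists_bound_of_continuousOn
    hh.continuousOn
  have hM0 : 0 ≤ M := (norm_nonneg _).trans (hM 0 ⟨by linarith, by linarith⟩)
  refine tendsto_integral_filter_of_dominated_convergence (fun t ↦ M * Real.exp (-ε * t ^ 2))
    (.of_forall fun m ↦ ?_) ?_ ((integrable_exp_neg_mul_sq hε).const_mul M)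
    (.of_forall fun t ↦ ?_)
  · exact (Continuous.aestronglyMeasurable (by fun_prop)).indicator measurableSet_Ioc
  · filter_upwards [eventually_gt_atTop 0] with m hm
    exact .of_forall (norm_indicator_Ioc_mul_pow_le hb hM0 hM hm)
  · have hev : ∀ᶠ m : ℕ in atTop, h (t / √(m : ℝ)) * g (t / √(m : ℝ)) ^ m =
        (Set.Ioc (-b * √(m : ℝ)) (b * √(m : ℝ))).indicator
          (fun t ↦ h (t / √(m : ℝ)) * g (t / √(m : ℝ)) ^ m) t := by
      filter_upwards [eventually_abs_div_sqrt_lt hb0 t,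
        tendsto_sqrt_natCast_atTop.eventually_gt_atTop 0] with m hm hs
      rw [abs_lt, lt_div_iff₀ hs, div_lt_iff₀ hs] at hm
      rw [Set.indicator_of_mem (Set.mem_Ioc.2 ⟨hm.1, hm.2.le⟩)]
    exact Tendsto.congr' hev <| ((hh.tendsto 0).comp (tendsto_div_sqrt_natCast t)).mul
      (tendsto_pow_comp_div_sqrt hg0 hc t)

theorem tendsto_succ_div_of_tendsto_sqrt_smul {J : ℕ → ℂ} {L : ℂ} (hL : L ≠ 0)
    (hJ : Tendsto (fun m : ℕ ↦ √(m : ℝ) • J m) atTop (𝓝 L)) :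
    Tendsto (fun m ↦ J (m + 1) / J m) atTop (𝓝 1) := by
  have hratio : Tendsto (fun m : ℕ ↦ √((m : ℝ) / (m + 1))) atTop (𝓝 1) := by
    simpa using (tendsto_natCast_div_add_atTop (1 : ℝ)).sqrt
  have hmul : Tendsto (fun m : ℕ ↦ ((√((m : ℝ) / (m + 1)) : ℝ) : ℂ) *
      ((√((m + 1 : ℕ) : ℝ) • J (m + 1)) / (√(m : ℝ) • J m))) atTop (𝓝 1) := by
    have hquot := (hJ.comp (tendsto_add_atTop_nat 1)).div hJ hL
    rw [div_self hL] at hquot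
    simpa using ((Complex.continuous_ofReal.tendsto 1).comp hratio).mul hquot
  refine hmul.congr' ?_
  filter_upwards [eventually_gt_atTop 0] with m hm
  have hm' : (√(m : ℝ) : ℂ) ≠ 0 := by
    exact_mod_cast (Real.sqrt_pos.2 (Nat.cast_pos.2 hm)).ne'
  have hm1 : (√((m : ℝ) + 1) : ℂ) ≠ 0 := by exact_mod_cast (Real.sqrt_pos.2 (by positivity)).ne'
  rw [Real.sqrt_div m.cast_nonneg, Nat.cast_add_one, Complex.real_smul, Complex.real_smul,
    Complex.ofReal_div]
  field_simp

theorem tendsto_succ_div_integral_mul_pow (hg : Continuous g) (hh : Continuous h) (hb0 : 0 < b)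
    (hε : 0 < ε) (hb : ∀ θ : ℝ, |θ| ≤ b → ‖g θ‖ ≤ Real.exp (-ε * θ ^ 2)) {c : ℂ} (hg0 : g 0 = 1)
    (hh0 : h 0 ≠ 0) (hc : Tendsto (fun θ : ℝ ↦ (g θ - 1) / (θ : ℂ) ^ 2) (𝓝[≠] 0) (𝓝 (-c))) :
    Tendsto (fun m : ℕ ↦ (∫ θ in -b..b, h θ * g θ ^ (m + 1)) / ∫ θ in -b..b, h θ * g θ ^ m)
      atTop (𝓝 1) := by
  have hc0 : c ≠ 0 := by
    rintro rfl
    exact hε.not_ge (le_re_of_norm_le_exp_neg_mul_sq hb0 hb hg0 hc)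
  have hdiv : (Real.pi / c : ℂ) ≠ 0 := div_ne_zero (by exact_mod_cast Real.pi_ne_zero) hc0
  have hL : h 0 * (Real.pi / c) ^ (1 / 2 : ℂ) ≠ 0 :=
    mul_ne_zero hh0 (by simp [Complex.cpow_eq_zero_iff, hdiv])
  exact tendsto_succ_div_of_tendsto_sqrt_smul (J := fun m ↦ ∫ θ in -b..b, h θ * g θ ^ m) hL
    (tendsto_sqrt_mul_integral_mul_pow hg hh hb0 hε hb hg0 hc)

theorem exists_tendsto_sub_one_div_sq {G : ℂ → ℂ} (hG : AnalyticAt ℂ G 0) (h0 : G 0 = 1)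
    (h1 : deriv G 0 = 0) :
    ∃ c : ℂ, Tendsto (fun θ : ℝ ↦ (G θ - 1) / (θ : ℂ) ^ 2) (𝓝[≠] 0) (𝓝 (-c)) := by
  obtain ⟨P, hP⟩ := hG
  have hcont : ContinuousAt (dslope (dslope G 0) 0) 0 :=
    hP.has_fpower_series_dslope_fslope.has_fpower_series_dslope_fslope.analyticAt.continuousAt
  refine ⟨-dslope (dslope G 0) 0 0, ?_⟩
  rw [neg_neg]
  have hcast : Tendsto (fun θ : ℝ ↦ (θ : ℂ)) (𝓝[≠] 0) (𝓝 0) :=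
    (Complex.continuous_ofReal.tendsto' 0 0 Complex.ofReal_zero).mono_left nhdsWithin_le_nhds
  refine (hcont.tendsto.comp hcast).congr' ?_
  filter_upwards [self_mem_nhdsWithin] with θ hθ
  have hθ' : (θ : ℂ) ≠ 0 := Complex.ofReal_ne_zero.2 hθ
  rw [Function.comp_apply, dslope_of_ne _ hθ', slope_def_field, dslope_of_ne _ hθ',
    slope_def_field, dslope_same, h1, h0, sub_zero, sub_zero]
  field_simp

end Laplace

section LagrangeInversion

open PowerSeries

theorem subst_eq_X_symm {R : Type*} [CommRing R] {f y : R⟦X⟧} (hf0 : constantCoeff f = 0)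
    (hf1 : IsUnit (coeff 1 f)) (hy0 : constantCoeff y = 0) (hfy : f.subst y = X) :
    y.subst f = X := by
  have hy : y = f.substInvOfIsUnit hf1 := by
    rw [← X_subst (f.substInvOfIsUnit hf1), ← hfy,
      ← subst_comp_subst_apply (.of_constantCoeff_zero' hf0) (.of_constantCoeff_zero' hy0),
      subst_substInvOfIsUnit_left f hf0, subst_X (.of_constantCoeff_zero' hy0)]
  rw [hy, subst_substInvOfIsUnit_left f hf0]

variable {K : Type*} [Field K] [CharZero K]

theorem coeff_inv_pow_add_X_mul_derivative_mul_inv_pow (B : K⟦X⟧) (k : ℕ) :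
    coeff k (B⁻¹ ^ k + X * (d⁄dX K B * B⁻¹ ^ (k + 1))) = if k = 0 then 1 else 0 := by
  rcases k with _ | k
  · simp
  have hderiv : d⁄dX K (B⁻¹ ^ (k + 1)) = -((k + 1 : ℕ) : K⟦X⟧) * (d⁄dX K B * B⁻¹ ^ (k + 2)) := by
    rw [derivative_pow, derivative_inv', Nat.add_sub_cancel]
    ring
  have hcoeff := congrArg (coeff k) hderiv
  rw [coeff_derivative, neg_mul, map_neg, ← nsmul_eq_mul, map_nsmul, nsmul_eq_mul,
    Nat.cast_succ] at hcoeff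
  rw [map_add, coeff_succ_X_mul, if_neg k.succ_ne_zero]
  refine (mul_right_inj' (Nat.cast_add_one_ne_zero k : (k + 1 : K) ≠ 0)).1 ?_
  linear_combination hcoeff

variable {B : K⟦X⟧}

/- For `i ≤ n` the product is `i * X ^ (i - 1)` times the series of the previous lemma with
`k = n - i`. -/
theorem coeff_derivative_pow_mul_inv_pow (hB : constantCoeff B ≠ 0) (i n : ℕ) :
    coeff n (d⁄dX K ((X * B) ^ i) * B⁻¹ ^ (n + 1)) = if i = n + 1 then (i : K) else 0 := by
  rcases i with _ | i
  · simp
  have hderiv : d⁄dX K ((X * B) ^ (i + 1)) * B⁻¹ ^ (n + 1) = ((i + 1 : ℕ) : K⟦X⟧) *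
      (X ^ i * (B ^ i * (B + X * d⁄dX K B) * B⁻¹ ^ (n + 1))) := by
    rw [derivative_pow, Derivation.leibniz, derivative_X, Nat.add_sub_cancel, smul_eq_mul,
      smul_eq_mul]
    ring
  rw [hderiv, ← nsmul_eq_mul, map_nsmul, nsmul_eq_mul, coeff_X_pow_mul']
  rcases lt_or_ge n i with hni | hin
  · rw [if_neg hni.not_ge, if_neg (by omega), mul_zero]
  obtain ⟨k, rfl⟩ := Nat.exists_eq_add_of_le hin
  have hcancel : B ^ i * (B + X * d⁄dX K B) * B⁻¹ ^ (i + k + 1) =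
      B⁻¹ ^ k + X * (d⁄dX K B * B⁻¹ ^ (k + 1)) := by
    calc _ = (B * B⁻¹) ^ (i + 1) * B⁻¹ ^ k +
          (B * B⁻¹) ^ i * (X * (d⁄dX K B * B⁻¹ ^ (k + 1))) := by ring
      _ = _ := by rw [PowerSeries.mul_inv_cancel B hB, one_pow, one_pow, one_mul, one_mul]
  rw [if_pos hin, Nat.add_sub_cancel_left, hcancel,
    coeff_inv_pow_add_X_mul_derivative_mul_inv_pow]
  simp

theorem coeff_derivative_subst_mul_inv_pow (hB : constantCoeff B ≠ 0) (g : K⟦X⟧) (n : ℕ) :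
    coeff n (d⁄dX K (g.subst (X * B)) * B⁻¹ ^ (n + 1)) = (n + 1) * coeff (n + 1) g := by
  have hsubst : HasSubst (X * B) := .of_constantCoeff_zero' (by simp)
  set S : K⟦X⟧ := (mk fun i ↦ coeff (i + (n + 2)) g).subst (X * B)
  have hexp : g.subst (X * B) =
      X ^ (n + 2) * (B ^ (n + 2) * S) + ∑ i ∈ Finset.range (n + 2), coeff i g • (X * B) ^ i := by
    conv_lhs => rw [eq_X_pow_mul_shift_add_trunc (n + 2) g]
    rw [subst_add hsubst, subst_mul hsubst, subst_pow hsubst, subst_X hsubst, subst_coe hsubst,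
      Polynomial.aeval_eq_sum_range' (natDegree_trunc_lt g (n + 1)), mul_pow, mul_assoc]
    congr 1
    refine Finset.sum_congr rfl fun i hi ↦ ?_
    rw [coeff_trunc, if_pos (Finset.mem_range.1 hi)]
  rw [hexp, map_add, add_mul, map_add, map_sum, Finset.sum_mul, map_sum]
  have htail : coeff n (d⁄dX K (X ^ (n + 2) * (B ^ (n + 2) * S)) * B⁻¹ ^ (n + 1)) = 0 := by
    rw [Derivation.leibniz, derivative_pow, derivative_X, smul_eq_mul, smul_eq_mul,
      show n + 2 - 1 = n + 1 by omega]
    set W : K⟦X⟧ := B ^ (n + 2) * S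
    rw [show (X ^ (n + 2) * d⁄dX K W + W * (((n + 2 : ℕ) : K⟦X⟧) * X ^ (n + 1) * 1)) *
        B⁻¹ ^ (n + 1) = X ^ (n + 1) * ((X * d⁄dX K W + ((n + 2 : ℕ) : K⟦X⟧) * W) *
          B⁻¹ ^ (n + 1)) by ring, coeff_X_pow_mul', if_neg (Nat.lt_succ_self n).not_ge]
  simp only [Derivation.map_smul, smul_mul_assoc, coeff_smul,
    coeff_derivative_pow_mul_inv_pow hB]
  rw [htail, zero_add, Finset.sum_eq_single_of_mem (n + 1) (Finset.self_mem_range_succ _)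
    fun i _ hi ↦ by rw [if_neg hi, smul_zero], if_pos rfl, smul_eq_mul, mul_comm, Nat.cast_succ]

theorem lagrange_inversion (hB : constantCoeff B ≠ 0) {y : K⟦X⟧} (hy0 : constantCoeff y = 0)
    (hy : (X * B).subst y = X) (n : ℕ) :
    (n + 1) * coeff (n + 1) y = coeff n (B⁻¹ ^ (n + 1)) := by
  have hinv : y.subst (X * B) = X := subst_eq_X_symm (by simp) (by simpa using hB) hy0 hy
  rw [← coeff_derivative_subst_mul_inv_pow hB, hinv, derivative_X, one_mul]

theorem lagrange_inversion_expand {a : ℕ} (ha : a ≠ 0) (hB : constantCoeff B ≠ 0) {y : K⟦X⟧}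
    (hy0 : constantCoeff y = 0) (hy : (X * expand a ha B).subst y = X) (m : ℕ) :
    (m * a + 1) * coeff (m * a + 1) y = coeff m (B⁻¹ ^ (m * a + 1)) := by
  have hB' : constantCoeff (expand a ha B) ≠ 0 := by rwa [constantCoeff_expand]
  have hinv : (expand a ha B)⁻¹ = expand a ha B⁻¹ := by
    rw [PowerSeries.inv_eq_iff_mul_eq_one hB', ← map_mul, PowerSeries.inv_mul_cancel B hB, map_one]
  have hlag := lagrange_inversion hB' hy0 hy (m * a)
  rw [hinv, ← map_pow, mul_comm m a, coeff_expand_mul] at hlag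
  rw [mul_comm m a, ← hlag]
  push_cast
  ring

end LagrangeInversion

section ReciprocalOfPolynomial

open Metric Polynomial
open scoped PowerSeries

theorem circleIntegral_pow_div_pow_succ {R : ℝ} (hR : 0 < R) (i m : ℕ) :
    ∮ z in C(0, R), z ^ i / z ^ (m + 1) = if i = m then 2 * Real.pi * Complex.I else 0 := by
  have hzpow : Set.EqOn (fun z : ℂ ↦ z ^ i / z ^ (m + 1))
      (fun z ↦ (z - 0) ^ ((i : ℤ) - m - 1)) (sphere 0 R) := fun z hz ↦ by
    have hz0 : z ≠ 0 := ne_of_mem_sphere hz hR.ne'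
    simp only [sub_zero]
    rw [sub_sub, zpow_sub₀ hz0, zpow_natCast]
    norm_cast
  rw [circleIntegral.integral_congr hR.le hzpow]
  split_ifs with him
  · simpa [him] using circleIntegral.integral_sub_center_inv (0 : ℂ) hR.ne'
  · exact circleIntegral.integral_sub_zpow_of_ne (by omega) _ _ _

theorem circleIntegrable_eval_div_pow {R : ℝ} (hR : 0 < R) (T : ℂ[X]) (m : ℕ) :
    CircleIntegrable (fun z ↦ T.eval z / z ^ m) 0 R :=
  ContinuousOn.circleIntegrable hR.le <| T.continuousOn.div (by fun_prop) fun _ hz ↦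
    pow_ne_zero _ (ne_of_mem_sphere hz hR.ne')

theorem circleIntegral_eval_div_pow_succ {R : ℝ} (hR : 0 < R) (T : ℂ[X]) (m : ℕ) :
    ∮ z in C(0, R), T.eval z / z ^ (m + 1) = 2 * Real.pi * Complex.I * T.coeff m := by
  induction T using Polynomial.induction_on' with
  | add T U hT hU =>
    simp only [eval_add, add_div, coeff_add, mul_add]
    rw [circleIntegral.integral_add (circleIntegrable_eval_div_pow hR T _)
      (circleIntegrable_eval_div_pow hR U _), hT, hU]
  | monomial i c =>
    simp only [eval_monomial, mul_div_assoc, coeff_monomial]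
    rw [circleIntegral.integral_const_mul, circleIntegral_pow_div_pow_succ hR]
    split_ifs <;> ring

theorem exists_mul_eq_one_add_X_pow_mul {K : Type*} [Field K] {P : K[X]} (hP : P.coeff 0 ≠ 0)
    (n : ℕ) : ∃ V : K[X], P * PowerSeries.trunc n (P : K⟦X⟧)⁻¹ = 1 + X ^ n * V := by
  suffices hdvd : X ^ n ∣ P * PowerSeries.trunc n (P : K⟦X⟧)⁻¹ - 1 by
    obtain ⟨V, hV⟩ := hdvd
    exact ⟨V, by rw [← hV, add_sub_cancel]⟩
  rw [X_pow_dvd_iff]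
  intro k hk
  have hinv : (P : K⟦X⟧) * (P : K⟦X⟧)⁻¹ = 1 :=
    PowerSeries.mul_inv_cancel _ (by rwa [constantCoeff_coe])
  rw [coeff_sub, sub_eq_zero, ← coeff_coe, ← coeff_coe, coe_mul, coe_one, ← hinv,
    ← PowerSeries.coeff_coe_trunc_of_lt hk, PowerSeries.trunc_mul_trunc,
    PowerSeries.coeff_coe_trunc_of_lt hk]

theorem circleIntegral_inv_eval_div_pow_succ {P : ℂ[X]} {R : ℝ} (hR : 0 < R)
    (hP : ∀ z ∈ closedBall (0 : ℂ) R, P.eval z ≠ 0) (m : ℕ) :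
    ∮ z in C(0, R), (P.eval z)⁻¹ / z ^ (m + 1) =
      2 * Real.pi * Complex.I * PowerSeries.coeff m (P : ℂ⟦X⟧)⁻¹ := by
  obtain ⟨V, hV⟩ := exists_mul_eq_one_add_X_pow_mul
    (by simpa [coeff_zero_eq_eval_zero] using hP 0 (mem_closedBall_self hR.le)) (m + 1)
  set T := PowerSeries.trunc (m + 1) (P : ℂ⟦X⟧)⁻¹ with hT
  have hsplit : Set.EqOn (fun z ↦ (P.eval z)⁻¹ / z ^ (m + 1))
      (fun z ↦ T.eval z / z ^ (m + 1) - V.eval z / P.eval z) (sphere 0 R) := fun z hz ↦ by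
    have hz0 : z ≠ 0 := ne_of_mem_sphere hz hR.ne'
    have hPz := hP z (sphere_subset_closedBall hz)
    have hVz := congrArg (eval z) hV
    simp only [eval_mul, eval_add, eval_one, eval_pow, eval_X] at hVz
    simp only
    field_simp
    linear_combination -hVz
  have hdiff : DifferentiableOn ℂ (fun z ↦ V.eval z / P.eval z) (closedBall 0 R) :=
    V.differentiableOn.div P.differentiableOn hP
  rw [circleIntegral.integral_congr hR.le hsplit, circleIntegral.integral_sub
      (circleIntegrable_eval_div_pow hR T _)
      ((hdiff.continuousOn.mono sphere_subset_closedBall).circleIntegrable hR.le),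
    (hdiff.diffContOnCl_ball subset_rfl).circleIntegral_eq_zero hR.le, sub_zero,
    circleIntegral_eval_div_pow_succ hR, hT, PowerSeries.coeff_trunc, if_pos m.lt_succ_self]

theorem hasSum_coeff_inv_mul_pow {P : ℂ[X]} {R : ℝ} (hP : ∀ z ∈ ball (0 : ℂ) R, P.eval z ≠ 0)
    {z : ℂ} (hz : z ∈ ball 0 R) :
    HasSum (fun n ↦ PowerSeries.coeff n (P : ℂ⟦X⟧)⁻¹ * z ^ n) (P.eval z)⁻¹ := by
  obtain ⟨ρ, hzρ, hρR⟩ := exists_between (mem_ball_zero_iff.1 hz)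
  have hρ : 0 < ρ := (norm_nonneg z).trans_lt hzρ
  have hPρ : ∀ w ∈ closedBall (0 : ℂ) ρ, P.eval w ≠ 0 := fun w hw ↦
    hP w (closedBall_subset_ball hρR hw)
  lift ρ to NNReal using hρ.le
  have hseries := (P.differentiableOn.inv hPρ).hasFPowerSeriesOnBall (mod_cast hρ)
  have hsum := hseries.hasSum (y := z) (by simpa [← ofReal_norm] using hzρ)
  have hterm : ∀ n, (cauchyPowerSeries (fun w ↦ P.eval w)⁻¹ 0 ρ n fun _ ↦ z) =
      PowerSeries.coeff n (P : ℂ⟦X⟧)⁻¹ * z ^ n := fun n ↦ by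
    have hintegrand : ∀ w : ℂ, (z / (w - 0)) ^ n • (w - 0)⁻¹ • (P.eval w)⁻¹ =
        z ^ n * ((P.eval w)⁻¹ / w ^ (n + 1)) := fun w ↦ by
      simp only [sub_zero, smul_eq_mul, div_eq_mul_inv, mul_pow, pow_succ, mul_inv, inv_pow]
      ring
    simp only [cauchyPowerSeries_apply, Pi.inv_apply, hintegrand]
    rw [circleIntegral.integral_const_mul, circleIntegral_inv_eval_div_pow_succ hρ hPρ,
      smul_eq_mul, mul_left_comm, inv_mul_cancel_left₀ Complex.two_pi_I_ne_zero, mul_comm]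
  simpa only [hterm, zero_add, Pi.inv_apply] using hsum

theorem coe_map_inv {K L : Type*} [Field K] [Field L] (φ : K →+* L) {P : K[X]}
    (hP : P.coeff 0 ≠ 0) : ((P.map φ : L[X]) : L⟦X⟧)⁻¹ = PowerSeries.map φ (P : K⟦X⟧)⁻¹ := by
  have hφ : PowerSeries.constantCoeff ((P.map φ : L[X]) : L⟦X⟧) ≠ 0 := by
    rwa [constantCoeff_coe, coeff_map, Ne, map_eq_zero]
  rw [PowerSeries.inv_eq_iff_mul_eq_one hφ, polynomial_map_coe, ← map_mul,
    PowerSeries.inv_mul_cancel _ (by rwa [constantCoeff_coe]), map_one]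

theorem aeval_complex_ofReal (Q : ℝ[X]) (x : ℝ) : aeval (x : ℂ) Q = (Q.eval x : ℝ) :=
  aeval_ofReal Q x

variable {Q : ℝ[X]} {R : ℝ}

theorem hasSum_ofReal_coeff_inv_mul_pow (hQ : ∀ z ∈ ball (0 : ℂ) R, aeval z Q ≠ 0)
    {z : ℂ} (hz : z ∈ ball 0 R) :
    HasSum (fun n ↦ ((PowerSeries.coeff n (Q : ℝ⟦X⟧)⁻¹ : ℝ) : ℂ) * z ^ n) (aeval z Q)⁻¹ := by
  have heval : ∀ w : ℂ, (Q.map (algebraMap ℝ ℂ)).eval w = aeval w Q := fun w ↦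
    eval_map_algebraMap Q w
  have hQ0 : Q.coeff 0 ≠ 0 := by
    have := hQ 0 (mem_ball_self (dist_nonneg.trans_lt hz))
    rwa [← heval, ← coeff_zero_eq_eval_zero, coeff_map, Ne, map_eq_zero] at this
  have hsum := hasSum_coeff_inv_mul_pow (P := Q.map (algebraMap ℝ ℂ))
    (fun w hw ↦ (heval w).symm ▸ hQ w hw) hz
  rwa [heval, coe_map_inv _ hQ0] at hsum

theorem hasSum_coeff_inv_mul_norm_pow (hQ : ∀ z ∈ ball (0 : ℂ) R, aeval z Q ≠ 0)
    {z : ℂ} (hz : z ∈ ball 0 R) :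
    HasSum (fun n ↦ PowerSeries.coeff n (Q : ℝ⟦X⟧)⁻¹ * ‖z‖ ^ n) (Q.eval ‖z‖)⁻¹ := by
  have hsum := hasSum_ofReal_coeff_inv_mul_pow hQ (z := ‖z‖) (by simpa using hz)
  rw [aeval_complex_ofReal] at hsum
  exact_mod_cast hsum

theorem norm_inv_aeval_sub_le (hA : ∀ n, 0 ≤ PowerSeries.coeff n (Q : ℝ⟦X⟧)⁻¹)
    (hQ : ∀ z ∈ ball (0 : ℂ) R, aeval z Q ≠ 0) {z : ℂ} (hz : z ∈ ball 0 R) (N : ℕ) :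
    ‖(aeval z Q)⁻¹ - ∑ n ∈ Finset.range N, ((PowerSeries.coeff n (Q : ℝ⟦X⟧)⁻¹ : ℝ) : ℂ) * z ^ n‖ ≤
      (Q.eval ‖z‖)⁻¹ - ∑ n ∈ Finset.range N, PowerSeries.coeff n (Q : ℝ⟦X⟧)⁻¹ * ‖z‖ ^ n := by
  have hC := (hasSum_nat_add_iff' N).2 (hasSum_ofReal_coeff_inv_mul_pow hQ hz)
  have hR := (hasSum_nat_add_iff' N).2 (hasSum_coeff_inv_mul_norm_pow hQ hz)
  rw [← hC.tsum_eq]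
  refine tsum_of_norm_bounded hR fun n ↦ ?_
  rw [norm_mul, norm_pow, Complex.norm_real, Real.norm_of_nonneg (hA _)]

variable {r : ℝ}

/- At a zero of least modulus, the bound `Q |z| ≤ |Q z|` inside the disc free of zeros extends to
the boundary by continuity and contradicts `0 < Q |z|`. -/
theorem aeval_ne_zero_of_coeff_inv_nonneg (hA : ∀ n, 0 ≤ PowerSeries.coeff n (Q : ℝ⟦X⟧)⁻¹)
    (hQ : ∀ x ∈ Set.Icc 0 r, 0 < Q.eval x) {z : ℂ} (hz : z ∈ closedBall 0 r) :
    aeval z Q ≠ 0 := by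
  intro hz0
  have hcompact : IsCompact (closedBall (0 : ℂ) r ∩ {w | aeval w Q = 0}) :=
    (isCompact_closedBall 0 r).inter_right (isClosed_singleton.preimage Q.continuous_aeval)
  obtain ⟨w, ⟨hwr, hw0⟩, hmin⟩ :=
    hcompact.exists_isMinOn ⟨z, hz, hz0⟩ continuous_norm.continuousOn
  rw [mem_closedBall_zero_iff] at hwr
  have hne : ∀ v ∈ ball (0 : ℂ) ‖w‖, aeval v Q ≠ 0 := fun v hv hv0 ↦ by
    rw [mem_ball_zero_iff] at hv
    exact hv.not_ge (hmin ⟨mem_closedBall_zero_iff.2 (hv.le.trans hwr), hv0⟩)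
  have hle : ∀ v ∈ ball (0 : ℂ) ‖w‖, Q.eval ‖v‖ ≤ ‖aeval v Q‖ := fun v hv ↦ by
    have hpos := hQ ‖v‖ ⟨norm_nonneg v, (mem_ball_zero_iff.1 hv).le.trans hwr⟩
    have hinv : ‖(aeval v Q)⁻¹‖ ≤ (Q.eval ‖v‖)⁻¹ := by
      simpa using norm_inv_aeval_sub_le hA hne hv 0
    rw [norm_inv] at hinv
    exact (inv_le_inv₀ (norm_pos_iff.2 (hne v hv)) hpos).1 hinv
  have hw_ne : ‖w‖ ≠ 0 := by
    rw [norm_ne_zero_iff]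
    rintro rfl
    have h0 := hQ 0 ⟨le_rfl, (norm_nonneg z).trans (mem_closedBall_zero_iff.1 hz)⟩
    have hQ0 : ((Q.eval 0 : ℝ) : ℂ) = 0 := by
      rw [← aeval_complex_ofReal, Complex.ofReal_zero]
      exact hw0
    exact h0.ne' (Complex.ofReal_eq_zero.1 hQ0)
  have hlew : Q.eval ‖w‖ ≤ ‖aeval w Q‖ :=
    le_on_closure hle (Q.continuous.comp continuous_norm).continuousOn
      Q.continuous_aeval.norm.continuousOn (by simp [closure_ball _ hw_ne])
  rw [hw0, norm_zero] at hlew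
  exact hlew.not_gt (hQ ‖w‖ ⟨norm_nonneg w, hwr⟩)

theorem exists_lt_forall_ball_aeval_ne_zero (hr : 0 ≤ r)
    (hQ : ∀ z ∈ closedBall (0 : ℂ) r, aeval z Q ≠ 0) :
    ∃ R > r, ∀ z ∈ ball (0 : ℂ) R, aeval z Q ≠ 0 := by
  obtain ⟨δ, hδ, hsub⟩ := (isCompact_closedBall (0 : ℂ) r).exists_thickening_subset_open
    (isOpen_ne.preimage Q.continuous_aeval) hQ
  rw [thickening_closedBall hδ hr] at hsub
  exact ⟨δ + r, by linarith, hsub⟩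

theorem exists_norm_add_mul_exp_le {a b : ℝ} (ha : 0 < a) (hb : 0 < b) :
    ∃ c > 0, ∀ θ : ℝ, |θ| ≤ Real.pi →
      ‖(a + b * Complex.exp (θ * Complex.I) : ℂ)‖ ≤ a + b - c * θ ^ 2 := by
  have := Real.pi_pos
  refine ⟨a * b / (a + b) * (2 / Real.pi ^ 2), by positivity, fun θ hθ ↦ ?_⟩
  set w : ℂ := a + b * Complex.exp (θ * Complex.I) with hw
  have hsq : ‖w‖ ^ 2 = (a + b) ^ 2 - 2 * (a * b) * (1 - Real.cos θ) := by
    rw [← Complex.normSq_eq_norm_sq, Complex.normSq_apply, hw]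
    simp only [Complex.add_re, Complex.add_im, Complex.re_ofReal_mul, Complex.im_ofReal_mul,
      Complex.exp_ofReal_mul_I_re, Complex.exp_ofReal_mul_I_im, Complex.ofReal_re,
      Complex.ofReal_im]
    linear_combination b ^ 2 * Real.sin_sq_add_cos_sq θ
  have hcos := Real.cos_le_one_sub_mul_cos_sq hθ
  have hamgm : 2 * ‖w‖ * (a + b) ≤ ‖w‖ ^ 2 + (a + b) ^ 2 := two_mul_le_add_sq _ _
  calc ‖w‖ ≤ a + b - a * b / (a + b) * (1 - Real.cos θ) := by
        rw [div_mul_eq_mul_div, le_sub_iff_add_le, ← le_sub_iff_add_le',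
          div_le_iff₀ (by positivity)]
        linarith
    _ ≤ a + b - a * b / (a + b) * (2 / Real.pi ^ 2 * θ ^ 2) := by gcongr; linarith
    _ = _ := by ring

theorem exists_norm_inv_aeval_circle_le (hr : 0 < r)
    (hA : ∀ n, 0 ≤ PowerSeries.coeff n (Q : ℝ⟦X⟧)⁻¹)
    (hA1 : 0 < PowerSeries.coeff 1 (Q : ℝ⟦X⟧)⁻¹) (hQ : ∀ x ∈ Set.Icc 0 r, 0 < Q.eval x) :
    ∃ ε > 0, ∀ θ : ℝ, |θ| ≤ Real.pi → ‖(aeval (circleMap 0 r θ) Q)⁻¹‖ ≤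
      (Q.eval r)⁻¹ * Real.exp (-ε * θ ^ 2) := by
  obtain ⟨R, hrR, hne⟩ := exists_lt_forall_ball_aeval_ne_zero hr.le fun z hz ↦
    aeval_ne_zero_of_coeff_inv_nonneg hA hQ hz
  have hA0 : 0 < PowerSeries.coeff 0 (Q : ℝ⟦X⟧)⁻¹ := by
    rw [PowerSeries.coeff_zero_eq_constantCoeff_apply, PowerSeries.constantCoeff_inv,
      constantCoeff_coe, coeff_zero_eq_eval_zero]
    exact inv_pos.2 (hQ 0 ⟨le_rfl, hr.le⟩)
  obtain ⟨c, hc, hnorm⟩ := exists_norm_add_mul_exp_le hA0 (mul_pos hA1 hr)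
  have hQr : 0 < Q.eval r := hQ r ⟨hr.le, le_rfl⟩
  refine ⟨c * Q.eval r, mul_pos hc hQr, fun θ hθ ↦ ?_⟩
  have hz : ‖circleMap 0 r θ‖ = r := by rw [norm_circleMap_zero, abs_of_pos hr]
  have htail := norm_inv_aeval_sub_le hA hne (z := circleMap 0 r θ)
    (by rwa [mem_ball_zero_iff, hz]) 2
  simp only [Finset.sum_range_succ, Finset.sum_range_zero, hz, pow_zero, pow_one, mul_one,
    zero_add] at htail
  have hhead := hnorm θ hθ
  rw [Complex.ofReal_mul, mul_assoc, ← circleMap_zero] at hhead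
  calc ‖(aeval (circleMap 0 r θ) Q)⁻¹‖ ≤ (Q.eval r)⁻¹ - c * θ ^ 2 := by
        linarith [norm_le_norm_sub_add (aeval (circleMap 0 r θ) Q)⁻¹
          (((PowerSeries.coeff 0 (Q : ℝ⟦X⟧)⁻¹ : ℝ) : ℂ) +
            ((PowerSeries.coeff 1 (Q : ℝ⟦X⟧)⁻¹ : ℝ) : ℂ) * circleMap 0 r θ)]
    _ = (Q.eval r)⁻¹ * (-(c * Q.eval r) * θ ^ 2 + 1) := by field_simp; ring
    _ ≤ (Q.eval r)⁻¹ * Real.exp (-(c * Q.eval r) * θ ^ 2) := by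
        gcongr
        exact Real.add_one_le_exp _

end ReciprocalOfPolynomial

section SaddlePoint

open Metric Polynomial
open scoped Topology PowerSeries

theorem circleIntegral_eq_integral_neg_pi_pi (f : ℂ → ℂ) (R : ℝ) :
    ∮ z in C(0, R), f z =
      Complex.I * ∫ θ in -Real.pi..Real.pi, circleMap 0 R θ * f (circleMap 0 R θ) := by
  have hper : Function.Periodic (fun θ ↦ circleMap 0 R θ * f (circleMap 0 R θ))
      (2 * Real.pi) := fun θ ↦ by simp only [periodic_circleMap 0 R θ]
  have hshift := hper.intervalIntegral_add_eq 0 (-Real.pi)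
  rw [zero_add, show -Real.pi + 2 * Real.pi = Real.pi by ring] at hshift
  rw [← hshift, circleIntegral, ← intervalIntegral.integral_const_mul]
  refine intervalIntegral.integral_congr fun θ _ ↦ ?_
  simp only [deriv_circleMap, smul_eq_mul]
  ring

variable {Q : ℝ[X]} {r : ℝ}

theorem inv_pow_powerSeries {K : Type*} [Field K] (φ : K⟦X⟧) (n : ℕ) : (φ ^ n)⁻¹ = φ⁻¹ ^ n := by
  induction n with
  | zero => simp
  | succ n ih => rw [pow_succ, PowerSeries.mul_inv_rev, ih, pow_succ']

theorem coeff_zero_ne_zero_of_aeval_ne_zero (hr : 0 ≤ r)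
    (hQ : ∀ z ∈ closedBall (0 : ℂ) r, aeval z Q ≠ 0) : Q.coeff 0 ≠ 0 := fun h0 ↦
  hQ 0 (mem_closedBall_self hr) <| by
    rw [← Complex.ofReal_zero, aeval_complex_ofReal, ← coeff_zero_eq_eval_zero, h0]

theorem ofReal_coeff_inv_pow (hr : 0 < r) (hQ : ∀ z ∈ closedBall (0 : ℂ) r, aeval z Q ≠ 0)
    (N m : ℕ) : ((PowerSeries.coeff m ((Q : ℝ⟦X⟧)⁻¹ ^ N) : ℝ) : ℂ) = (2 * Real.pi : ℂ)⁻¹ *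
      ∫ θ in -Real.pi..Real.pi, (aeval (circleMap 0 r θ) Q)⁻¹ ^ N / circleMap 0 r θ ^ m := by
  have heval : ∀ z : ℂ, ((Q ^ N).map (algebraMap ℝ ℂ)).eval z = aeval z Q ^ N := fun z ↦ by
    rw [eval_map_algebraMap, map_pow]
  have hQ0 : (Q ^ N).coeff 0 ≠ 0 := by
    rw [coeff_zero_eq_eval_zero, eval_pow, ← coeff_zero_eq_eval_zero]
    exact pow_ne_zero _ (coeff_zero_ne_zero_of_aeval_ne_zero hr.le hQ)
  have hcauchy := circleIntegral_inv_eval_div_pow_succ (P := (Q ^ N).map (algebraMap ℝ ℂ)) hr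
    (fun z hz ↦ by rw [heval]; exact pow_ne_zero _ (hQ z hz)) m
  rw [coe_map_inv _ hQ0, coe_pow, inv_pow_powerSeries, PowerSeries.coeff_map,
    circleIntegral_eq_integral_neg_pi_pi] at hcauchy
  have hintegrand : ∀ θ, circleMap 0 r θ * ((((Q ^ N).map (algebraMap ℝ ℂ)).eval
      (circleMap 0 r θ))⁻¹ / circleMap 0 r θ ^ (m + 1)) =
      (aeval (circleMap 0 r θ) Q)⁻¹ ^ N / circleMap 0 r θ ^ m := fun θ ↦ by
    rw [heval, pow_succ', ← mul_div_assoc, mul_div_mul_left _ _ (circleMap_ne_center hr.ne'),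
      inv_pow]
  simp only [hintegrand] at hcauchy
  rw [eq_inv_mul_iff_mul_eq₀ (by exact_mod_cast Real.two_pi_pos.ne')]
  refine mul_left_cancel₀ Complex.I_ne_zero ?_
  rw [hcauchy, Complex.coe_algebraMap]
  ring

theorem exists_tendsto_div_aeval_circleMap {F : ℝ[X]} (hF : F.eval r ≠ 0)
    (hF' : F.derivative.eval r = 0) :
    ∃ c : ℂ, Tendsto (fun θ : ℝ ↦ ((F.eval r : ℝ) / aeval (circleMap 0 r θ) F - 1) / (θ : ℂ) ^ 2)
      (𝓝[≠] 0) (𝓝 (-c)) := by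
  set γ : ℂ → ℂ := fun w ↦ r * Complex.exp (w * Complex.I) with hγ
  have hγ0 : γ 0 = (r : ℝ) := by simp [hγ]
  have hFr : ((F.eval r : ℝ) : ℂ) ≠ 0 := Complex.ofReal_ne_zero.2 hF
  have hFγ0 : aeval (γ 0) F = (F.eval r : ℝ) := by rw [hγ0, aeval_complex_ofReal]
  have hne0 : aeval (γ 0) F ≠ 0 := hFγ0 ▸ hFr
  have hγa : AnalyticAt ℂ γ 0 := by fun_prop
  have hderiv : HasDerivAt (fun w ↦ (F.eval r : ℝ) / aeval (γ w) F : ℂ → ℂ) 0 0 := by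
    have hcomp := (F.hasDerivAt_aeval (γ 0)).comp 0 hγa.differentiableAt.hasDerivAt
    have hF'γ0 : aeval (γ 0) F.derivative = 0 := by
      rw [hγ0, aeval_complex_ofReal, hF', Complex.ofReal_zero]
    rw [hF'γ0, zero_mul] at hcomp
    exact ((hasDerivAt_const (0 : ℂ) ((F.eval r : ℝ) : ℂ)).div hcomp hne0).congr_deriv (by simp)
  simp only [circleMap_zero]
  exact exists_tendsto_sub_one_div_sq (G := fun w ↦ (F.eval r : ℝ) / aeval (γ w) F)
    (analyticAt_const.div (hγa.aeval_polynomial F) hne0)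
    (by simp only [hFγ0, div_self hFr]) hderiv.deriv

theorem exists_norm_div_aeval_circleMap_le {a : ℕ} (ha : a ≠ 0) (hr : 0 < r)
    (hA : ∀ n, 0 ≤ PowerSeries.coeff n (Q : ℝ⟦X⟧)⁻¹)
    (hA1 : 0 < PowerSeries.coeff 1 (Q : ℝ⟦X⟧)⁻¹) (hQ : ∀ x ∈ Set.Icc 0 r, 0 < Q.eval x) :
    ∃ ε > 0, ∀ θ : ℝ, |θ| ≤ Real.pi →
      ‖(((X * Q ^ a).eval r : ℝ) / aeval (circleMap 0 r θ) (X * Q ^ a) : ℂ)‖ ≤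
        Real.exp (-ε * θ ^ 2) := by
  obtain ⟨ε, hε, hbound⟩ := exists_norm_inv_aeval_circle_le hr hA hA1 hQ
  have hQr : 0 < Q.eval r := hQ r ⟨hr.le, le_rfl⟩
  refine ⟨a * ε, by positivity, fun θ hθ ↦ ?_⟩
  have hnorm : ‖((((X : ℝ[X]) * Q ^ a).eval r : ℝ) /
      aeval (circleMap 0 r θ) ((X : ℝ[X]) * Q ^ a) : ℂ)‖ =
      (Q.eval r * ‖(aeval (circleMap 0 r θ) Q)⁻¹‖) ^ a := by
    simp only [eval_mul, eval_X, eval_pow, map_mul, map_pow, aeval_X, norm_div, norm_mul, norm_pow,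
      norm_circleMap_zero, norm_inv, Complex.norm_real, Real.norm_of_nonneg hQr.le,
      Real.norm_of_nonneg hr.le, abs_of_pos hr]
    rw [mul_div_mul_left _ _ hr.ne', ← div_pow, div_eq_mul_inv]
  calc _ = (Q.eval r * ‖(aeval (circleMap 0 r θ) Q)⁻¹‖) ^ a := hnorm
    _ ≤ (Q.eval r * ((Q.eval r)⁻¹ * Real.exp (-ε * θ ^ 2))) ^ a := by gcongr; exact hbound θ hθ
    _ = Real.exp (-(a * ε) * θ ^ 2) := by
      rw [mul_inv_cancel_left₀ hQr.ne', ← Real.exp_nat_mul]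
      ring_nf

theorem ofReal_coeff_inv_pow_mul_add_one (hr : 0 < r)
    (hQ : ∀ z ∈ closedBall (0 : ℂ) r, aeval z Q ≠ 0) {C : ℝ} (hC : C ≠ 0) (a m : ℕ) :
    ((PowerSeries.coeff m ((Q : ℝ⟦X⟧)⁻¹ ^ (m * a + 1)) : ℝ) : ℂ) =
      (2 * Real.pi : ℂ)⁻¹ * ((C : ℂ)⁻¹ ^ m * ∫ θ in -Real.pi..Real.pi,
        (aeval (circleMap 0 r θ) Q)⁻¹ * (C / aeval (circleMap 0 r θ) (X * Q ^ a)) ^ m) := by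
  rw [ofReal_coeff_inv_pow hr hQ, ← intervalIntegral.integral_const_mul ((C : ℂ)⁻¹ ^ m)]
  congr 1
  refine intervalIntegral.integral_congr fun θ _ ↦ ?_
  have hC' : (C : ℂ) ≠ 0 := Complex.ofReal_ne_zero.2 hC
  simp only [map_mul, map_pow, aeval_X, div_pow, mul_pow, inv_pow, ← pow_mul, pow_succ,
    mul_comm m a]
  field_simp

theorem tendsto_coeff_inv_pow_succ_div {a : ℕ} (ha : a ≠ 0) (hr : 0 < r)
    (hA : ∀ n, 0 ≤ PowerSeries.coeff n (Q : ℝ⟦X⟧)⁻¹)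
    (hA1 : 0 < PowerSeries.coeff 1 (Q : ℝ⟦X⟧)⁻¹) (hQ : ∀ x ∈ Set.Icc 0 r, 0 < Q.eval x)
    (hcrit : (X * Q ^ a).derivative.eval r = 0) :
    Tendsto (fun m : ℕ ↦ PowerSeries.coeff (m + 1) ((Q : ℝ⟦X⟧)⁻¹ ^ ((m + 1) * a + 1)) /
      PowerSeries.coeff m ((Q : ℝ⟦X⟧)⁻¹ ^ (m * a + 1))) atTop (𝓝 ((X * Q ^ a).eval r)⁻¹) := by
  set F : ℝ[X] := X * Q ^ a with hF
  have hne : ∀ z ∈ closedBall (0 : ℂ) r, aeval z Q ≠ 0 := fun z hz ↦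
    aeval_ne_zero_of_coeff_inv_nonneg hA hQ hz
  have hz : ∀ θ, circleMap 0 r θ ∈ closedBall (0 : ℂ) r := fun θ ↦
    circleMap_mem_closedBall 0 hr.le θ
  have hcircle : Continuous (circleMap 0 r) := continuous_circleMap 0 r
  have hFr : F.eval r ≠ 0 := by
    rw [hF, eval_mul, eval_X, eval_pow]
    exact mul_ne_zero hr.ne' (pow_ne_zero a (hQ r ⟨hr.le, le_rfl⟩).ne')
  have hFz : ∀ θ, aeval (circleMap 0 r θ) F ≠ 0 := fun θ ↦ by
    rw [hF, map_mul, map_pow, aeval_X]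
    exact mul_ne_zero (circleMap_ne_center hr.ne') (pow_ne_zero _ (hne _ (hz θ)))
  obtain ⟨ε, hε, hbound⟩ := exists_norm_div_aeval_circleMap_le ha hr hA hA1 hQ
  obtain ⟨c, hc⟩ := exists_tendsto_div_aeval_circleMap hFr hcrit
  have hFr' : ((F.eval r : ℝ) : ℂ) ≠ 0 := Complex.ofReal_ne_zero.2 hFr
  have hlim := tendsto_succ_div_integral_mul_pow
    (g := fun θ ↦ (F.eval r : ℝ) / aeval (circleMap 0 r θ) F)
    (h := fun θ ↦ (aeval (circleMap 0 r θ) Q)⁻¹)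
    (continuous_const.div (F.continuous_aeval.comp hcircle) hFz)
    ((Q.continuous_aeval.comp hcircle).inv₀ fun θ ↦ hne _ (hz θ)) Real.pi_pos hε hbound
    (by rw [show circleMap 0 r 0 = (r : ℝ) by simp [circleMap], aeval_complex_ofReal,
      div_self hFr']) (inv_ne_zero (hne _ (hz 0))) hc
  have hscaled := hlim.const_mul ((F.eval r : ℝ) : ℂ)⁻¹
  rw [mul_one, ← Complex.ofReal_inv] at hscaled
  refine tendsto_ofReal_iff.1 (hscaled.congr fun m ↦ ?_)
  have htwo_pi : (2 * Real.pi : ℂ)⁻¹ ≠ 0 := inv_ne_zero (by exact_mod_cast Real.two_pi_pos.ne')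
  rw [Complex.ofReal_div, ofReal_coeff_inv_pow_mul_add_one hr hne hFr,
    ofReal_coeff_inv_pow_mul_add_one hr hne hFr, mul_div_mul_left _ _ htwo_pi, pow_succ, mul_assoc,
    mul_div_mul_left _ _ (pow_ne_zero m (inv_ne_zero hFr')), mul_div_assoc, Complex.ofReal_inv]

end SaddlePoint

section SmallestCriticalPoint

open Polynomial
open scoped Topology PowerSeries

theorem pos_of_deriv_zero_pos_of_forall_deriv_ne_zero {f : ℝ → ℝ} {s : ℝ}
    (hf : Differentiable ℝ f) (h0 : f 0 = 0) (hpos : 0 < deriv f 0)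
    (hne : ∀ t ∈ Set.Ioo 0 s, deriv f t ≠ 0) {t : ℝ} (ht : t ∈ Set.Ioc 0 s) : 0 < f t := by
  have hs : 0 < s := ht.1.trans_le ht.2
  have hderiv : ∀ u ∈ Set.Ico 0 s, 0 < deriv f u := by
    refine (hasDerivWithinAt_forall_lt_or_forall_gt_of_forall_ne (convex_Ico 0 s)
      (fun u _ ↦ (hf u).hasDerivAt.hasDerivWithinAt) fun u hu ↦ ?_).resolve_left
        fun hneg ↦ (hneg 0 ⟨le_rfl, hs⟩).not_gt hpos
    rcases hu.1.eq_or_lt with rfl | hu0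
    exacts [hpos.ne', hne u ⟨hu0, hu.2⟩]
  have hmono : StrictMonoOn f (Set.Icc 0 s) :=
    strictMonoOn_of_deriv_pos (convex_Icc 0 s) hf.continuous.continuousOn fun u hu ↦
      hderiv u (Set.Ioo_subset_Ico_self (interior_Icc (a := (0 : ℝ)) ▸ hu))
  exact h0 ▸ hmono ⟨le_rfl, hs.le⟩ ⟨ht.1.le, ht.2⟩ ht.1

variable {Q : ℝ[X]} {a : ℕ} {s : ℝ}

theorem eval_zero_pos_of_coeff_inv_pos (hA0 : 0 ≤ PowerSeries.coeff 0 (Q : ℝ⟦X⟧)⁻¹)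
    (hA1 : 0 < PowerSeries.coeff 1 (Q : ℝ⟦X⟧)⁻¹) : 0 < Q.eval 0 := by
  have hQ0 : Q.eval 0 ≠ 0 := fun h0 ↦ by
    have hinv : (Q : ℝ⟦X⟧)⁻¹ = 0 := PowerSeries.inv_eq_zero.2 <| by
      rw [constantCoeff_coe, coeff_zero_eq_eval_zero, h0]
    rw [hinv, map_zero] at hA1
    exact hA1.false
  rw [PowerSeries.coeff_zero_eq_constantCoeff_apply, PowerSeries.constantCoeff_inv,
    constantCoeff_coe, coeff_zero_eq_eval_zero, inv_nonneg] at hA0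
  exact hA0.lt_of_ne' hQ0

theorem eval_pos_of_forall_derivative_ne_zero (ha : a ≠ 0) (hs : 0 < s) (hQ0 : 0 < Q.eval 0)
    (hne : ∀ t ∈ Set.Ioo 0 s, (X * expand ℝ a Q).derivative.eval t ≠ 0) {x : ℝ}
    (hx : x ∈ Set.Icc 0 (s ^ a)) : 0 < Q.eval x := by
  rcases hx.1.eq_or_lt with rfl | hx0
  · exact hQ0
  obtain ⟨t, ht0, rfl⟩ : ∃ t, 0 < t ∧ t ^ a = x :=
    ⟨x ^ (a : ℝ)⁻¹, Real.rpow_pos_of_pos hx0 _, Real.rpow_inv_natCast_pow hx.1 ha⟩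
  have hts : t ≤ s := (pow_le_pow_iff_left₀ ht0.le hs.le ha).1 hx.2
  have hpos : 0 < (X * expand ℝ a Q).eval t :=
    pos_of_deriv_zero_pos_of_forall_deriv_ne_zero (f := fun t ↦ (X * expand ℝ a Q).eval t)
      (X * expand ℝ a Q).differentiable (by simp)
      (by rw [Polynomial.deriv]; simpa [ha, expand_eval] using hQ0)
      (by simpa only [Polynomial.deriv] using hne) ⟨ht0, hts⟩
  rw [eval_mul, eval_X, expand_eval] at hpos
  exact pos_of_mul_pos_right hpos ht0.le

theorem X_mul_expand_pow (Q : ℝ[X]) (a : ℕ) :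
    (X * expand ℝ a Q) ^ a = expand ℝ a (X * Q ^ a) := by
  rw [map_mul, map_pow, expand_X, mul_pow]

theorem derivative_X_mul_pow_eval_eq_zero (ha : a ≠ 0) (hs : s ≠ 0)
    (hcrit : (X * expand ℝ a Q).derivative.eval s = 0) :
    (X * Q ^ a).derivative.eval (s ^ a) = 0 := by
  have hchain := congrArg (fun P ↦ P.derivative.eval s) (X_mul_expand_pow Q a)
  simp only [derivative_pow, derivative_expand, eval_mul, hcrit, mul_zero, expand_eval,
    eval_natCast, eval_pow, eval_X] at hchain
  have hfactor : (a : ℝ) * s ^ (a - 1) ≠ 0 :=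
    mul_ne_zero (Nat.cast_ne_zero.2 ha) (pow_ne_zero _ hs)
  exact (mul_eq_zero.1 hchain.symm).resolve_right hfactor

theorem X_mul_expand_subst (ha : a ≠ 0) {y : ℝ⟦X⟧} (hy0 : PowerSeries.constantCoeff y = 0) :
    (PowerSeries.X * PowerSeries.expand a ha (Q : ℝ⟦X⟧)).subst y =
      aeval y (X * expand ℝ a Q) := by
  have hsubst := PowerSeries.HasSubst.of_constantCoeff_zero' hy0
  have hXa : PowerSeries.HasSubst (PowerSeries.X ^ a : ℝ⟦X⟧) := .X_pow ha
  have hya : PowerSeries.HasSubst (y ^ a) :=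
    .of_constantCoeff_zero' (by rw [map_pow, hy0, zero_pow ha])
  rw [PowerSeries.subst_mul hsubst, PowerSeries.subst_X hsubst, PowerSeries.expand_apply,
    PowerSeries.subst_comp_subst_apply hXa hsubst, PowerSeries.subst_pow hsubst,
    PowerSeries.subst_X hsubst, PowerSeries.subst_coe hya, map_mul, aeval_X,
    expand_aeval]

theorem tendsto_coeff_succ_div_of_aeval_X_mul_expand (ha : a ≠ 0)
    (hA : ∀ n, 0 ≤ PowerSeries.coeff n (Q : ℝ⟦X⟧)⁻¹)
    (hA1 : 0 < PowerSeries.coeff 1 (Q : ℝ⟦X⟧)⁻¹) (hs : 0 < s)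
    (hcrit : (X * expand ℝ a Q).derivative.eval s = 0)
    (hne : ∀ t ∈ Set.Ioo 0 s, (X * expand ℝ a Q).derivative.eval t ≠ 0) {y : ℝ⟦X⟧}
    (hy0 : PowerSeries.constantCoeff y = 0) (hy : aeval y (X * expand ℝ a Q) = PowerSeries.X) :
    Tendsto (fun m : ℕ ↦ PowerSeries.coeff ((m + 1) * a + 1) y / PowerSeries.coeff (m * a + 1) y)
      atTop (𝓝 (1 / (X * expand ℝ a Q).eval s ^ a)) := by
  have hQ0 : 0 < Q.eval 0 := eval_zero_pos_of_coeff_inv_pos (hA 0) hA1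
  have hlagrange : ∀ m : ℕ, PowerSeries.coeff (m * a + 1) y =
      PowerSeries.coeff m ((Q : ℝ⟦X⟧)⁻¹ ^ (m * a + 1)) / (m * a + 1) := fun m ↦ by
    rw [eq_div_iff (by positivity), mul_comm]
    refine lagrange_inversion_expand ha ?_ hy0 ((X_mul_expand_subst ha hy0).trans hy) m
    rw [constantCoeff_coe, coeff_zero_eq_eval_zero]
    exact hQ0.ne'
  have hindex : Tendsto (fun m : ℕ ↦ ((m : ℝ) * a + 1) / ((m + 1) * a + 1)) atTop (𝓝 1) := by
    have ha' : (a : ℝ) ≠ 0 := Nat.cast_ne_zero.2 ha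
    have hlin := tendsto_add_mul_div_add_mul_atTop_nhds (1 : ℝ) (a + 1) a ha'
    rw [div_self ha'] at hlin
    exact hlin.congr fun m ↦ by ring_nf
  have hlim := hindex.mul <| tendsto_coeff_inv_pow_succ_div ha (pow_pos hs a) hA hA1
    (fun x hx ↦ eval_pos_of_forall_derivative_ne_zero ha hs hQ0 hne hx)
    (derivative_X_mul_pow_eval_eq_zero ha hs.ne' hcrit)
  have hvalue : 1 / (X * expand ℝ a Q).eval s ^ a = 1 * ((X * Q ^ a).eval (s ^ a))⁻¹ := by
    rw [← expand_eval, ← X_mul_expand_pow, eval_pow, one_div, one_mul]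
  rw [hvalue]
  refine hlim.congr fun m ↦ ?_
  rw [hlagrange, hlagrange, Nat.cast_succ, div_div_div_comm, div_eq_mul_inv _ (_ / _),
    inv_div, mul_comm]

end SmallestCriticalPoint

section AlternatingRecurrence

open PowerSeries

theorem alternating_sum_mem_Icc {f : ℕ → ℝ} (hf : Antitone f) (h0 : ∀ k, 0 ≤ f k) (n : ℕ) :
    ∑ k ∈ Finset.range n, (-1) ^ k * f k ∈ Set.Icc 0 (f 0) := by
  induction n generalizing f with
  | zero => simpa using h0 0
  | succ n ih =>
    obtain ⟨hlo, hhi⟩ := ih (f := fun k ↦ f (k + 1)) (fun _ _ h ↦ hf (by omega)) fun k ↦ h0 _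
    have h01 : f (0 + 1) ≤ f 0 := hf (Nat.le_succ 0)
    simp only [Finset.sum_range_succ', pow_succ, mul_neg_one, neg_mul, Finset.sum_neg_distrib,
      pow_zero, one_mul]
    exact ⟨by linarith, by linarith⟩

theorem sub_le_alternating_sum {f : ℕ → ℝ} (hf : Antitone f) (h0 : ∀ k, 0 ≤ f k) {n : ℕ}
    (hn : n ≠ 0) : f 0 - f 1 ≤ ∑ k ∈ Finset.range n, (-1) ^ k * f k := by
  obtain ⟨n, rfl⟩ := Nat.exists_eq_succ_of_ne_zero hn
  have htail := (alternating_sum_mem_Icc (f := fun k ↦ f (k + 1)) (fun _ _ h ↦ hf (by omega))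
    (fun k ↦ h0 _) n).2
  simp only [Nat.succ_eq_add_one, Finset.sum_range_succ', pow_succ, mul_neg_one, neg_mul,
    Finset.sum_neg_distrib, pow_zero, one_mul]
  linarith

variable {A : ℝ⟦X⟧} {l : ℝ} {n : ℕ}

theorem pow_mul_coeff_le_coeff_add (hl : 0 ≤ l) (hgrow : ∀ j < n, l * coeff j A ≤ coeff (j + 1) A)
    {i j : ℕ} (hij : j + i ≤ n) : l ^ i * coeff j A ≤ coeff (j + i) A := by
  induction i with
  | zero => simp
  | succ i ih =>
    calc l ^ (i + 1) * coeff j A = l * (l ^ i * coeff j A) := by ring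
      _ ≤ l * coeff (j + i) A := by gcongr; exact ih (by omega)
      _ ≤ coeff (j + (i + 1)) A := hgrow (j + i) (by omega)

theorem coeff_X_pow_mul_nonneg (hpos : ∀ j ≤ n, 0 < coeff j A) (e : ℕ) :
    0 ≤ coeff n (X ^ e * A) := by
  rw [coeff_X_pow_mul']
  split_ifs
  exacts [(hpos _ (Nat.sub_le n e)).le, le_rfl]

theorem sq_mul_coeff_X_pow_mul_le (hl : 1 ≤ l) (hpos : ∀ j ≤ n, 0 < coeff j A)
    (hgrow : ∀ j < n, l * coeff j A ≤ coeff (j + 1) A) {e e' : ℕ} (he : e + 2 ≤ e') :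
    l ^ 2 * coeff n (X ^ e' * A) ≤ coeff n (X ^ e * A) := by
  rcases lt_or_ge n e' with hlt | hle
  · rw [coeff_X_pow_mul' A, if_neg hlt.not_ge, mul_zero]
    exact coeff_X_pow_mul_nonneg hpos e
  · obtain ⟨i, rfl⟩ := Nat.exists_eq_add_of_le he
    have hshift : n - e = n - (e + 2 + i) + (2 + i) := by omega
    rw [coeff_X_pow_mul', if_pos hle, coeff_X_pow_mul', if_pos (by omega), hshift]
    refine le_trans ?_ (pow_mul_coeff_le_coeff_add (zero_le_one.trans hl) hgrow (by omega))
    gcongr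
    exacts [(hpos _ (Nat.sub_le n _)).le, Nat.le_add_right 2 i]

variable {d : ℕ} {b : ℕ → ℝ} {e : ℕ → ℕ}

theorem mul_coeff_le_coeff_succ (hd : d ≠ 0) (hl : 1 ≤ l) (hb : ∀ k, 0 ≤ b k)
    (hbl : ∀ k, b (k + 1) ≤ l ^ 2 * b k) (hb01 : l ^ 3 + b 1 ≤ l ^ 2 * b 0) (he0 : e 0 = 0)
    (he : ∀ k, e k + 2 ≤ e (k + 1)) (hpos : ∀ j ≤ n, 0 < coeff j A)
    (hgrow : ∀ j < n, l * coeff j A ≤ coeff (j + 1) A)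
    (hrec : coeff (n + 1) A = ∑ k ∈ Finset.range d, (-1) ^ k * (b k * coeff n (X ^ e k * A))) :
    l * coeff n A ≤ coeff (n + 1) A := by
  set f : ℕ → ℝ := fun k ↦ b k * coeff n (X ^ e k * A) with hf
  have hl0 : 0 < l := zero_lt_one.trans_le hl
  have hnonneg : ∀ k, 0 ≤ coeff n (X ^ e k * A) := fun k ↦ coeff_X_pow_mul_nonneg hpos _
  have hdecay : ∀ k, l ^ 2 * coeff n (X ^ e (k + 1) * A) ≤ coeff n (X ^ e k * A) := fun k ↦
    sq_mul_coeff_X_pow_mul_le hl hpos hgrow (he k)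
  have hanti : Antitone f := antitone_nat_of_succ_le fun k ↦ by
    calc b (k + 1) * coeff n (X ^ e (k + 1) * A)
        ≤ l ^ 2 * b k * coeff n (X ^ e (k + 1) * A) :=
          mul_le_mul_of_nonneg_right (hbl k) (hnonneg _)
      _ = b k * (l ^ 2 * coeff n (X ^ e (k + 1) * A)) := by ring
      _ ≤ b k * coeff n (X ^ e k * A) := mul_le_mul_of_nonneg_left (hdecay k) (hb k)
  have hsum := sub_le_alternating_sum hanti (fun k ↦ mul_nonneg (hb k) (hnonneg k)) hd
  rw [← hrec] at hsum
  have hf0 : f 0 = b 0 * coeff n A := by simp only [hf, he0, pow_zero, one_mul]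
  have hf1 : l ^ 2 * f 1 ≤ b 1 * coeff n A := by
    have := mul_le_mul_of_nonneg_left (hdecay 0) (hb 1)
    simp only [he0, pow_zero, one_mul, zero_add] at this
    linarith
  refine le_of_mul_le_mul_left ?_ (pow_pos hl0 2)
  calc l ^ 2 * (l * coeff n A) = l ^ 3 * coeff n A := by ring
    _ ≤ (l ^ 2 * b 0 - b 1) * coeff n A :=
      mul_le_mul_of_nonneg_right (by linarith) (hpos n le_rfl).le
    _ ≤ l ^ 2 * (f 0 - f 1) := by rw [hf0]; linarith
    _ ≤ l ^ 2 * coeff (n + 1) A := by gcongr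

/- The growth rate `l` is carried through the induction because it is what makes the alternating
sum in the recurrence decreasing in absolute value. -/
theorem coeff_pos_of_alternating_recurrence (hd : d ≠ 0) (hl : 1 ≤ l) (hb : ∀ k, 0 ≤ b k)
    (hbl : ∀ k, b (k + 1) ≤ l ^ 2 * b k) (hb01 : l ^ 3 + b 1 ≤ l ^ 2 * b 0) (he0 : e 0 = 0)
    (he : ∀ k, e k + 2 ≤ e (k + 1)) (hA0 : 0 < coeff 0 A)
    (hrec : ∀ n, coeff (n + 1) A =
      ∑ k ∈ Finset.range d, (-1) ^ k * (b k * coeff n (X ^ e k * A))) (n : ℕ) :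
    0 < coeff n A := by
  have hstep : ∀ n, (∀ j ≤ n, 0 < coeff j A) → (∀ j < n, l * coeff j A ≤ coeff (j + 1) A) →
      l * coeff n A ≤ coeff (n + 1) A := fun n hpos hgrow ↦
    mul_coeff_le_coeff_succ hd hl hb hbl hb01 he0 he hpos hgrow (hrec n)
  have hboth : (∀ j ≤ n, 0 < coeff j A) ∧ ∀ j < n, l * coeff j A ≤ coeff (j + 1) A := by
    induction n with
    | zero => simpa using hA0
    | succ n ih =>
      have hn := hstep n ih.1 ih.2
      have hn1 : 0 < coeff (n + 1) A :=
        (mul_pos (zero_lt_one.trans_le hl) (ih.1 n le_rfl)).trans_le hn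
      refine ⟨fun j hj ↦ ?_, fun j hj ↦ ?_⟩
      · rcases Nat.le_succ_iff.1 hj with hj | rfl
        exacts [ih.1 j hj, hn1]
      · rcases (Nat.lt_succ_iff_lt_or_eq).1 hj with hj | rfl
        exacts [ih.2 j hj, hn]
  exact hboth.1 n le_rfl

end AlternatingRecurrence

section HypercubePolynomial

open Polynomial
open scoped PowerSeries

/-- The number `1 + p + ⋯ + p ^ (k - 1)`, that is, the exponent for which
`p ^ k = repunit p k * (p - 1) + 1`. -/
def repunit (p k : ℕ) : ℕ := ∑ i ∈ Finset.range k, p ^ i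

theorem repunit_zero (p : ℕ) : repunit p 0 = 0 := Finset.sum_range_zero _

theorem repunit_succ (p k : ℕ) : repunit p (k + 1) = repunit p k + p ^ k :=
  Finset.sum_range_succ _ k

theorem repunit_succ' (p k : ℕ) : repunit p (k + 1) = p * repunit p k + 1 :=
  geom_sum_succ

theorem repunit_mul_add_one {p : ℕ} (hp : 1 ≤ p) (k : ℕ) :
    repunit p k * (p - 1) + 1 = p ^ k := by
  obtain ⟨a, rfl⟩ := Nat.exists_eq_add_of_le' hp
  exact geom_sum_mul_add a k

/-- The polynomial `Q` with `q_{d,p}(z) = z * Q(z ^ (p - 1))`. -/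
noncomputable def hypercubePoly (d p : ℕ) : ℝ[X] :=
  ∑ k ∈ Finset.range (d + 1), C ((-1) ^ k * (d.choose k : ℝ)) * X ^ repunit p k

theorem X_mul_expand_hypercubePoly (d : ℕ) {p : ℕ} (hp : 1 ≤ p) :
    X * expand ℝ (p - 1) (hypercubePoly d p) =
      ∑ k ∈ Finset.range (d + 1), C ((-1) ^ k * (d.choose k : ℝ)) * X ^ p ^ k := by
  rw [hypercubePoly, map_sum, Finset.mul_sum]
  refine Finset.sum_congr rfl fun k _ ↦ ?_
  rw [map_mul, map_pow, expand_C, expand_X, ← repunit_mul_add_one hp k]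
  ring

theorem eval_X_mul_expand_hypercubePoly (d : ℕ) {p : ℕ} (hp : 1 ≤ p) (z : ℝ) :
    (X * expand ℝ (p - 1) (hypercubePoly d p)).eval z =
      ∑ k ∈ Finset.range (d + 1), (-1) ^ k * (d.choose k : ℝ) * z ^ p ^ k := by
  rw [X_mul_expand_hypercubePoly d hp, eval_finsetSum]
  simp only [eval_mul, eval_C, eval_pow, eval_X]

theorem aeval_map_X_mul_expand_hypercubePoly (d : ℕ) {p : ℕ} (hp : 1 ≤ p) (y : ℚ⟦X⟧) :
    aeval (PowerSeries.map (algebraMap ℚ ℝ) y) (X * expand ℝ (p - 1) (hypercubePoly d p)) =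
      PowerSeries.map (algebraMap ℚ ℝ)
        (∑ k ∈ Finset.range (d + 1), (-1) ^ k * (d.choose k : ℚ⟦X⟧) * y ^ p ^ k) := by
  rw [X_mul_expand_hypercubePoly d hp, map_sum, map_sum]
  simp only [map_mul, map_pow, map_neg, map_one, map_natCast, aeval_X]

theorem hypercubePoly_coeff_zero (d p : ℕ) : (hypercubePoly d p).coeff 0 = 1 := by
  rw [coeff_zero_eq_eval_zero, hypercubePoly, eval_finsetSum, Finset.sum_range_succ',
    Finset.sum_eq_zero fun k _ ↦ by simp [repunit_succ']]
  simp [repunit_zero]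

theorem coeff_inv_hypercubePoly_succ (d p n : ℕ) :
    PowerSeries.coeff (n + 1) (hypercubePoly d p : ℝ⟦X⟧)⁻¹ =
      ∑ k ∈ Finset.range d, (-1) ^ k * ((d.choose (k + 1) : ℝ) * PowerSeries.coeff n
        (PowerSeries.X ^ (p * repunit p k) * (hypercubePoly d p : ℝ⟦X⟧)⁻¹)) := by
  set A := (hypercubePoly d p : ℝ⟦X⟧)⁻¹
  have hQA : (hypercubePoly d p : ℝ⟦X⟧) * A = 1 := PowerSeries.mul_inv_cancel _ <| by
    rw [constantCoeff_coe, hypercubePoly_coeff_zero]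
    exact one_ne_zero
  have hcoe : (hypercubePoly d p : ℝ⟦X⟧) = ∑ k ∈ Finset.range (d + 1),
      PowerSeries.C ((-1) ^ k * (d.choose k : ℝ)) * PowerSeries.X ^ repunit p k := by
    rw [hypercubePoly, ← coeToPowerSeries.ringHom_apply, map_sum]
    simp only [coeToPowerSeries.ringHom_apply, coe_mul, coe_C, coe_pow, coe_X]
  have hcoeff := congrArg (PowerSeries.coeff (n + 1)) hQA
  rw [hcoe, Finset.sum_mul, map_sum, PowerSeries.coeff_one, if_neg n.succ_ne_zero] at hcoeff
  simp only [mul_assoc, PowerSeries.coeff_C_mul] at hcoeff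
  simp only [Finset.sum_range_succ', repunit_succ', repunit_zero, pow_succ', mul_assoc,
    PowerSeries.coeff_succ_X_mul, pow_zero, one_mul, Nat.choose_zero_right, Nat.cast_one, neg_mul,
    Finset.sum_neg_distrib] at hcoeff
  linarith

theorem choose_add_two_le (d k : ℕ) :
    (d.choose (k + 2) : ℝ) ≤ ((d + 1) / 2) ^ 2 * d.choose (k + 1) := by
  have hle : (d.choose (k + 2) : ℝ) ≤ d * d.choose (k + 1) := by
    have : d.choose (k + 2) ≤ d * d.choose (k + 1) := by
      calc d.choose (k + 2) ≤ d.choose (k + 2) * (k + 1 + 1) :=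
            Nat.le_mul_of_pos_right _ (by omega)
        _ = d.choose (k + 1) * (d - (k + 1)) := Nat.choose_succ_right_eq d (k + 1)
        _ ≤ d * d.choose (k + 1) := by rw [mul_comm]; gcongr; omega
    exact_mod_cast this
  exact hle.trans (by gcongr; nlinarith [sq_nonneg ((d : ℝ) - 1)])

theorem coeff_inv_hypercubePoly_pos {d p : ℕ} (hd : 1 ≤ d) (hp : 2 ≤ p) (n : ℕ) :
    0 < PowerSeries.coeff n (hypercubePoly d p : ℝ⟦X⟧)⁻¹ := by
  have hd' : (1 : ℝ) ≤ d := Nat.one_le_cast.2 hd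
  refine coeff_pos_of_alternating_recurrence (l := ((d : ℝ) + 1) / 2)
    (b := fun k ↦ d.choose (k + 1)) (e := fun k ↦ p * repunit p k) (by omega) (by linarith)
    (fun k ↦ Nat.cast_nonneg _) (choose_add_two_le d) ?_ (by simp [repunit_zero]) (fun k ↦ ?_) ?_
    (coeff_inv_hypercubePoly_succ d p) n
  · simp only [zero_add, Nat.choose_one_right, Nat.reduceAdd, Nat.cast_choose_two]
    nlinarith [mul_nonneg (sub_nonneg.2 hd') (sq_nonneg ((d : ℝ) - 1))]
  · have : 1 ≤ p ^ k := Nat.one_le_pow _ _ (by omega)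
    rw [repunit_succ]
    nlinarith
  · rw [PowerSeries.coeff_zero_eq_constantCoeff_apply, PowerSeries.constantCoeff_inv,
      constantCoeff_coe, hypercubePoly_coeff_zero, inv_one]
    exact one_pos

end HypercubePolynomial

/-- Fix `d ≥ 1` and `p ≥ 2`, let `q(z) = ∑_{k=0}^{d} (-1)^k C(d,k) z^{p^k}`,
and let `s > 0` be the smallest positive real with `q'(s) = 0`.  Then the growth-rate limit
`G_{d,p} = lim_{m→∞} C_{d,p}((m+1)(p-1)+1) / C_{d,p}(m(p-1)+1)` exists and equals
`1 / q(s)^{p-1}`, where `C_{d,p}(n)` is the coefficient of `x^n` in the unique power series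
`y ∈ ℚ⟦x⟧` with zero constant term satisfying `∑_{k=0}^{d} (-1)^k C(d,k) y^{p^k} = x`. -/
theorem statement_10 (d p : ℕ) (hd : 1 ≤ d) (hp : 2 ≤ p)
    (y : PowerSeries ℚ)
    (h0 : PowerSeries.constantCoeff y = 0)
    (heq : ∑ k ∈ Finset.range (d + 1),
        (-1 : PowerSeries ℚ) ^ k * (d.choose k : PowerSeries ℚ) * y ^ p ^ k
        = PowerSeries.X)
    (q : ℝ → ℝ)
    (hq : ∀ z : ℝ, q z =
        ∑ k ∈ Finset.range (d + 1), (-1 : ℝ) ^ k * (d.choose k : ℝ) * z ^ p ^ k)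
    (s : ℝ) (hs : 0 < s) (hcrit : deriv q s = 0)
    (hmin : ∀ t : ℝ, 0 < t → deriv q t = 0 → s ≤ t) :
    Tendsto
      (fun m : ℕ =>
        ((PowerSeries.coeff ((m + 1) * (p - 1) + 1) y : ℚ) : ℝ) /
          ((PowerSeries.coeff (m * (p - 1) + 1) y : ℚ) : ℝ))
      atTop (nhds (1 / q s ^ (p - 1))) := by
  set P : Polynomial ℝ := .X * Polynomial.expand ℝ (p - 1) (hypercubePoly d p)
  have hp1 : 1 ≤ p := one_le_two.trans hp
  obtain rfl : q = fun z ↦ P.eval z :=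
    funext fun z ↦ (hq z).trans (eval_X_mul_expand_hypercubePoly d hp1 z).symm
  simp only [Polynomial.deriv] at hcrit hmin
  have hne : ∀ t ∈ Set.Ioo 0 s, P.derivative.eval t ≠ 0 := fun t ht htcrit ↦
    (hmin t ht.1 htcrit).not_gt ht.2
  have hy : Polynomial.aeval (PowerSeries.map (algebraMap ℚ ℝ) y) P = PowerSeries.X := by
    rw [aeval_map_X_mul_expand_hypercubePoly d hp1, heq, PowerSeries.map_X]
  have hy0 : PowerSeries.constantCoeff (PowerSeries.map (algebraMap ℚ ℝ) y) = 0 := by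
    rw [← PowerSeries.coeff_zero_eq_constantCoeff_apply, PowerSeries.coeff_map,
      PowerSeries.coeff_zero_eq_constantCoeff_apply, h0, map_zero]
  simpa only [PowerSeries.coeff_map, eq_ratCast] using
    tendsto_coeff_succ_div_of_aeval_X_mul_expand (by omega)
      (fun n ↦ (coeff_inv_hypercubePoly_pos hd hp n).le) (coeff_inv_hypercubePoly_pos hd hp 1)
      hs hcrit hne hy0 hy
end

section
/- For all integers d ≥ 1 and p ≥ 2, the coefficients a_n of φ_{d,p} satisfy a_n ≥ (d−1) · a_{n−(p−1)} for every n ≥ p; consequently a_n ≥ 0 for all n ≥ 0 (the power series φ_{d,p} has nonnegative coefficients). -/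
/-!
Write `d = e + 1`, `y = e z^(p-1)`, and split the coefficient `e + 1` of `z^(p-1)` to get
`P = 1 - y - S` with `S = z^(p-1) - C(d,2) z^(p^2-1) + C(d,3) z^(p^3-1) - ⋯`. Consecutive terms
`f_k` of `S` satisfy `f_{k+1} ≤ y^r f_k` coefficientwise for some `r`, so
`f_k - f_{k+1} ≥ (1 - y^r) f_k = (1 - y)(1 + y + ⋯ + y^(r-1)) f_k`. After division by `1 - y` the
terms of `S` therefore decrease coefficientwise, and the alternating sum `G = S / (1 - y)` has
nonnegative coefficients. Since `P = (1 - G)(1 - y)`, the series `(1 - y) φ = 1 / (1 - G)` has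
nonnegative coefficients, which is the asserted inequality; dividing by `1 - y` once more gives
`φ ≥ 0`.
-/

open Finset PowerSeries

theorem sum_range_neg_one_pow_mul_mem {A S : Type*} [Ring A] [SetLike S A]
    [AddSubmonoidClass S A] {s : S} {f : ℕ → A} (hf : ∀ k, f k ∈ s)
    (hsub : ∀ k, f k - f (k + 1) ∈ s) (N : ℕ) : ∑ k ∈ range N, (-1) ^ k * f k ∈ s := by
  induction N using Nat.twoStepInduction generalizing f with
  | zero => simp
  | one => simpa using hf 0
  | more N ih _ =>
    have hsplit : ∑ k ∈ range (N + 2), (-1) ^ k * f k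
        = ∑ k ∈ range N, (-1) ^ k * f (k + 2) + (f 0 - f 1) := by
      rw [sum_range_succ', sum_range_succ']
      simp [pow_succ, sub_eq_neg_add, add_assoc]
    rw [hsplit]
    exact add_mem (ih (fun k ↦ hf (k + 2)) fun k ↦ hsub (k + 2)) (hsub 0)

section NonnegCoeffs

variable {R : Type*} [CommRing R] [PartialOrder R] [IsOrderedRing R]

variable (R) in
/-- The semiring of power series with nonnegative coefficients; `g - f ∈ nonnegCoeffs R` encodes
the coefficientwise inequality `f ≤ g`. -/
def nonnegCoeffs : Subsemiring R⟦X⟧ where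
  carrier := {f | ∀ n, 0 ≤ coeff n f}
  zero_mem' n := by simp
  one_mem' n := by
    rw [coeff_one]
    split_ifs <;> simp
  add_mem' hf hg n := by simpa using add_nonneg (hf n) (hg n)
  mul_mem' hf hg n := by
    rw [coeff_mul]
    exact sum_nonneg fun i _ ↦ mul_nonneg (hf i.1) (hg i.2)

theorem X_mem_nonnegCoeffs : (X : R⟦X⟧) ∈ nonnegCoeffs R := fun n ↦ by
  rw [coeff_X]
  split_ifs <;> simp

theorem mem_nonnegCoeffs_of_one_sub_mul_mem {y f : R⟦X⟧} (hy : y ∈ nonnegCoeffs R)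
    (hy0 : constantCoeff y = 0) (h : (1 - y) * f ∈ nonnegCoeffs R) : f ∈ nonnegCoeffs R := by
  intro n
  induction n using Nat.strong_induction_on with
  | _ n ih =>
    have hmul : 0 ≤ coeff n (y * f) := by
      rw [coeff_mul]
      refine sum_nonneg fun ⟨i, j⟩ hij ↦ ?_
      rw [HasAntidiagonal.mem_antidiagonal] at hij
      rcases Nat.eq_zero_or_pos i with rfl | hi
      · simp [hy0]
      · exact mul_nonneg (hy i) (ih j (by omega))
    have hsplit : f = (1 - y) * f + y * f := by ring
    rw [hsplit, map_add]
    exact add_nonneg (h n) hmul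

theorem mul_sub_mul_mem_nonnegCoeffs {y g f₁ f₂ : R⟦X⟧} {r : ℕ} (hy : y ∈ nonnegCoeffs R)
    (hg : g ∈ nonnegCoeffs R) (hyg : (1 - y) * g = 1) (hf₁ : f₁ ∈ nonnegCoeffs R)
    (hf : y ^ r * f₁ - f₂ ∈ nonnegCoeffs R) : g * f₁ - g * f₂ ∈ nonnegCoeffs R := by
  have hgeom : (1 - y ^ r) * g = ∑ i ∈ range r, y ^ i := by
    rw [← mul_neg_geom_sum y r, mul_right_comm, hyg, one_mul]
  have hsplit : g * f₁ - g * f₂ = (∑ i ∈ range r, y ^ i) * f₁ + g * (y ^ r * f₁ - f₂) := by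
    rw [← hgeom]
    ring
  rw [hsplit]
  exact add_mem (mul_mem (sum_mem fun i _ ↦ pow_mem hy i) hf₁) (mul_mem hg hf)

theorem one_sub_mul_mem_nonnegCoeffs_of_alternating {y φ : R⟦X⟧} {f : ℕ → R⟦X⟧} {r : ℕ → ℕ}
    {N : ℕ} (hy : y ∈ nonnegCoeffs R) (hy0 : constantCoeff y = 0)
    (hf : ∀ k, f k ∈ nonnegCoeffs R) (hf0 : ∀ k, constantCoeff (f k) = 0)
    (hstep : ∀ k, y ^ r k * f k - f (k + 1) ∈ nonnegCoeffs R)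
    (hφ : (1 - y - ∑ k ∈ range N, (-1) ^ k * f k) * φ = 1) :
    (1 - y) * φ ∈ nonnegCoeffs R := by
  obtain ⟨g, hyg⟩ : ∃ g, (1 - y) * g = 1 :=
    IsUnit.exists_right_inv (isUnit_iff_constantCoeff.mpr (by simp [hy0]))
  have hg : g ∈ nonnegCoeffs R :=
    mem_nonnegCoeffs_of_one_sub_mul_mem hy hy0 (by rw [hyg]; exact one_mem _)
  have hG : ∑ k ∈ range N, (-1) ^ k * (g * f k) ∈ nonnegCoeffs R :=
    sum_range_neg_one_pow_mul_mem (fun k ↦ mul_mem hg (hf k))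
      (fun k ↦ mul_sub_mul_mem_nonnegCoeffs hy hg hyg (hf k) (hstep k)) N
  refine mem_nonnegCoeffs_of_one_sub_mul_mem hG (by simp [hf0]) ?_
  have hfactor : (1 - ∑ k ∈ range N, (-1) ^ k * (g * f k)) * (1 - y)
      = 1 - y - ∑ k ∈ range N, (-1) ^ k * f k := by
    simp only [mul_left_comm _ g, ← mul_sum]
    linear_combination -(∑ k ∈ range N, (-1) ^ k * f k) * hyg
  rw [← mul_assoc, hfactor, hφ]
  exact one_mem _

end NonnegCoeffs

/-- The absolute values of the coefficients of the alternating sum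
`z^(p-1) - C(d,2) z^(p^2-1) + C(d,3) z^(p^3-1) - ⋯`: the `k`-th one belongs to `z^(p^(k+1)-1)`, and
it is `C(d,k+1)` except at `k = 0`, where `d - 1` has been subtracted from `C(d,1) = d`. -/
def tailCoeff (d : ℕ) : ℕ → ℕ
  | 0 => 1
  | k + 1 => d.choose (k + 2)

theorem choose_succ_two_le_sq (e : ℕ) : (e + 1).choose 2 ≤ e ^ 2 := by
  have h : (e + 1).choose 2 * 2 = (e + 1) * e := by
    simpa using Nat.choose_succ_right_eq (e + 1) 1
  have hsq : e ≤ e * e := Nat.le_mul_self e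
  nlinarith

theorem choose_add_two_le_mul_choose (e k : ℕ) :
    (e + 1).choose (k + 2) ≤ e * (e + 1).choose (k + 1) :=
  calc (e + 1).choose (k + 2)
      ≤ (e + 1).choose (k + 2) * (k + 2) := Nat.le_mul_of_pos_right _ (by omega)
    _ = (e + 1).choose (k + 1) * (e - k) := by
      rw [Nat.choose_succ_right_eq, Nat.add_sub_add_right]
    _ ≤ (e + 1).choose (k + 1) * e := Nat.mul_le_mul_left _ (Nat.sub_le e k)
    _ = e * (e + 1).choose (k + 1) := mul_comm _ _

theorem tailCoeff_succ_le {p : ℕ} (hp : 2 ≤ p) (e k : ℕ) :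
    tailCoeff (e + 1) (k + 1) ≤ e ^ p ^ (k + 1) * tailCoeff (e + 1) k := by
  have hpow : p ≤ p ^ (k + 1) := Nat.le_self_pow k.succ_ne_zero p
  cases k with
  | zero =>
    rcases Nat.eq_zero_or_pos e with rfl | he
    · simp [tailCoeff]
    · simpa [tailCoeff] using
        (choose_succ_two_le_sq e).trans (Nat.pow_le_pow_right he hp)
  | succ k =>
    exact (choose_add_two_le_mul_choose e (k + 1)).trans
      (Nat.mul_le_mul_right _ (Nat.le_self_pow (by omega) e))

theorem sub_one_mul_pow_add_pow_sub_one {p : ℕ} (hp : 1 ≤ p) (k : ℕ) :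
    (p - 1) * p ^ k + (p ^ k - 1) = p ^ (k + 1) - 1 := by
  obtain ⟨q, rfl⟩ := Nat.exists_eq_add_of_le' hp
  have hpos : 1 ≤ (q + 1) ^ k := Nat.one_le_pow _ _ q.succ_pos
  rw [Nat.add_sub_cancel, ← Nat.add_sub_assoc hpos, pow_succ']
  ring_nf

theorem alternating_choose_sum_eq {R : Type*} [CommRing R] (e p : ℕ) :
    ∑ k ∈ range (e + 1 + 1), (-1 : R⟦X⟧) ^ k * ((e + 1).choose k : R⟦X⟧) * X ^ (p ^ k - 1)
      = 1 - (e : R⟦X⟧) * X ^ (p - 1)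
        - ∑ k ∈ range (e + 1),
          (-1) ^ k * ((tailCoeff (e + 1) k : R⟦X⟧) * X ^ (p ^ (k + 1) - 1)) := by
  rw [sum_range_succ', sum_range_succ', sum_range_succ' _ e]
  simp only [tailCoeff, pow_succ (-1 : R⟦X⟧) (_ + 1), mul_neg_one, neg_mul, sum_neg_distrib,
    mul_assoc, zero_add, pow_zero, pow_one, Nat.choose_zero_right, Nat.choose_one_right,
    Nat.cast_add, Nat.cast_one, one_mul, mul_one, Nat.sub_self]
  ring

theorem alternating_choose_one_sub_mul_mem_nonnegCoeffs {R : Type*} [CommRing R] [PartialOrder R]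
    [IsOrderedRing R] {e p : ℕ} (hp : 2 ≤ p) {φ : R⟦X⟧}
    (hφ : (∑ k ∈ range (e + 1 + 1),
      (-1 : R⟦X⟧) ^ k * ((e + 1).choose k : R⟦X⟧) * X ^ (p ^ k - 1)) * φ = 1) :
    (1 - (e : R⟦X⟧) * X ^ (p - 1)) * φ ∈ nonnegCoeffs R := by
  have hmonomial (c m : ℕ) : (c : R⟦X⟧) * X ^ m ∈ nonnegCoeffs R :=
    mul_mem (natCast_mem _ c) (pow_mem X_mem_nonnegCoeffs m)
  have hexp (k : ℕ) : p ^ (k + 1) - 1 ≠ 0 := by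
    have : p ≤ p ^ (k + 1) := Nat.le_self_pow k.succ_ne_zero p
    omega
  rw [alternating_choose_sum_eq] at hφ
  refine one_sub_mul_mem_nonnegCoeffs_of_alternating (r := fun k ↦ p ^ (k + 1)) (hmonomial _ _)
    (by simp [Nat.sub_ne_zero_of_lt hp]) (fun k ↦ hmonomial _ _) (fun k ↦ by simp [hexp k])
    (fun k ↦ ?_) hφ
  have hdiff : ((e : R⟦X⟧) * X ^ (p - 1)) ^ p ^ (k + 1)
        * ((tailCoeff (e + 1) k : R⟦X⟧) * X ^ (p ^ (k + 1) - 1))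
      - (tailCoeff (e + 1) (k + 1) : R⟦X⟧) * X ^ (p ^ (k + 1 + 1) - 1)
      = ((e ^ p ^ (k + 1) * tailCoeff (e + 1) k - tailCoeff (e + 1) (k + 1) : ℕ) : R⟦X⟧)
        * X ^ (p ^ (k + 1 + 1) - 1) := by
    rw [Nat.cast_sub (tailCoeff_succ_le hp e k),
      ← sub_one_mul_pow_add_pow_sub_one (by omega) (k + 1), pow_add, pow_mul, mul_pow]
    push_cast
    ring
  rw [hdiff]
  exact hmonomial _ _

theorem statement_11_general {R : Type*} [CommRing R] [PartialOrder R] [IsOrderedRing R]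
    (d p : ℕ) (hd : 1 ≤ d) (hp : 2 ≤ p) (P φ : R⟦X⟧)
    (hP : P = ∑ k ∈ range (d + 1), (-1 : R⟦X⟧) ^ k * (d.choose k : R⟦X⟧) * X ^ (p ^ k - 1))
    (hφ : P * φ = 1) :
    (∀ n : ℕ, p - 1 ≤ n → ((d : R) - 1) * coeff (n - (p - 1)) φ ≤ coeff n φ) ∧
    (∀ n : ℕ, 0 ≤ coeff n φ) := by
  obtain ⟨e, rfl⟩ := Nat.exists_eq_add_of_le' hd
  subst hP
  have hmem := alternating_choose_one_sub_mul_mem_nonnegCoeffs hp hφ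
  refine ⟨fun n hn ↦ ?_, mem_nonnegCoeffs_of_one_sub_mul_mem
    (mul_mem (natCast_mem _ e) (pow_mem X_mem_nonnegCoeffs _))
    (by simp [Nat.sub_ne_zero_of_lt hp]) hmem⟩
  have hcoeff : coeff n ((1 - (e : R⟦X⟧) * X ^ (p - 1)) * φ)
      = coeff n φ - e * coeff (n - (p - 1)) φ := by
    rw [sub_mul, one_mul, map_sub, mul_assoc, ← map_natCast (C (R := R)), coeff_C_mul,
      coeff_X_pow_mul', if_pos hn]
  have hnonneg := hmem n
  rw [hcoeff, sub_nonneg] at hnonneg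
  simpa using hnonneg

/-- For `d ≥ 1`, `p ≥ 2`, let `P(z) = ∑_{k=0}^{d} (-1)^k C(d,k) z^{p^k - 1}`
in `ℚ⟦z⟧` (which has constant term `1`, hence is invertible), let `φ_{d,p}` be its
multiplicative inverse, and let `a_n` be the coefficient of `z^n` in `φ_{d,p}`.  Then
`a_n ≥ (d-1) ⬝ a_{n-(p-1)}` for every `n ≥ p`; consequently `a_n ≥ 0` for all `n ≥ 0`. -/
theorem statement_11 (d p : ℕ) (hd : 1 ≤ d) (hp : 2 ≤ p)
    (P φ : PowerSeries ℚ)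
    (hP : P = ∑ k ∈ Finset.range (d + 1),
        (-1 : PowerSeries ℚ) ^ k * (d.choose k : PowerSeries ℚ) * PowerSeries.X ^ (p ^ k - 1))
    (hφ : P * φ = 1) :
    (∀ n : ℕ, p ≤ n →
      ((d : ℚ) - 1) * PowerSeries.coeff (n - (p - 1)) φ ≤ PowerSeries.coeff n φ) ∧
    (∀ n : ℕ, 0 ≤ PowerSeries.coeff n φ) := by
  obtain ⟨hstep, hnonneg⟩ := statement_11_general d p hd hp P φ hP hφ
  exact ⟨fun n hn ↦ hstep n (by omega), hnonneg⟩
end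

section
/- For all integers d ≥ 1 and p ≥ 2, the coefficients a_n of φ_{d,p} satisfy: (i) a_n = 0 whenever (p−1) does not divide n (so φ_{d,p} is (p−1)-periodic), and (ii) a_n = d^{n/(p−1)} for every n with 0 ≤ n < p^2 − 1 and (p−1) | n. -/
/-!
The exponents `p ^ k - 1` are `p - 1` times the repunits `0, 1, p + 1, p ^ 2 + p + 1, …`, so `P(z)`
is `Q(z ^ (p - 1))` with `Q = 1 - d X + O(X ^ (p + 1))`. Hence `φ(z) = Q⁻¹(z ^ (p - 1))`, and modulo
`X ^ (p + 1)` the series `Q⁻¹` is the geometric series `∑ d ^ n X ^ n`.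
-/

section

open Finset PowerSeries

theorem dvd_sub_of_mul_eq_one {S : Type*} [CommRing S] {x a a' b b' : S}
    (hab : a * b = 1) (hab' : a' * b' = 1) (h : x ∣ a - a') : x ∣ b - b' := by
  have hsub : b - b' = (a - a') * -(b * b') := by linear_combination b' * hab - b * hab'
  exact hsub ▸ h.mul_right _

variable {R : Type*} [CommRing R]

theorem one_sub_C_mul_X_mul_rescale_mk_one (r : R) :
    (1 - C r * X) * rescale r (mk 1) = 1 := by
  simpa [mul_comm] using congrArg (rescale r) (mk_one_mul_one_sub_eq_one R)

theorem coeff_eq_pow_of_X_pow_dvd_of_mul_eq_one {r : R} {N n : ℕ} {f g : R⟦X⟧}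
    (hf : X ^ N ∣ f - (1 - C r * X)) (hfg : f * g = 1) (hn : n < N) :
    coeff n g = r ^ n := by
  have hdvd : X ^ N ∣ g - rescale r (mk 1) :=
    dvd_sub_of_mul_eq_one hfg (one_sub_C_mul_X_mul_rescale_mk_one r) hf
  simpa [sub_eq_zero] using X_pow_dvd_iff.mp hdvd n hn

theorem exists_expand_eq_of_expand_mul_eq_one {m : ℕ} (hm : m ≠ 0) {f g : R⟦X⟧}
    (hfg : expand m hm f * g = 1) : ∃ h, f * h = 1 ∧ expand m hm h = g := by
  have hf : IsUnit f := by
    rw [isUnit_iff_constantCoeff, ← constantCoeff_expand m hm, ← isUnit_iff_constantCoeff]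
    exact .of_mul_eq_one g hfg
  obtain ⟨h, hfh⟩ := hf.exists_right_inv
  have hexp : expand m hm f * expand m hm h = 1 := by rw [← map_mul, hfh, map_one]
  exact ⟨h, hfh, (IsUnit.of_mul_eq_one g hfg).mul_left_cancel (hexp.trans hfg.symm)⟩

variable (R) in
/-- The alternating binomial sum `∑_{k ≤ d} (-1)^k C(d,k) X^(e k)` with a prescribed sequence of
exponents `e`. Both `P` (exponents `p ^ k - 1`) and the series `Q` with `P(z) = Q(z ^ (p - 1))`
(repunit exponents) are of this form. -/
noncomputable def altBinomSeries (d : ℕ) (e : ℕ → ℕ) : R⟦X⟧ :=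
  ∑ k ∈ range (d + 1), (-1) ^ k * (d.choose k : R⟦X⟧) * X ^ e k

theorem expand_altBinomSeries {m : ℕ} (hm : m ≠ 0) (d : ℕ) (e : ℕ → ℕ) :
    expand m hm (altBinomSeries R d e) = altBinomSeries R d fun k ↦ m * e k := by
  simp [altBinomSeries, pow_mul]

theorem X_pow_dvd_altBinomSeries_sub (d : ℕ) {e : ℕ → ℕ} {N : ℕ} (h0 : e 0 = 0) (h1 : e 1 = 1)
    (hN : ∀ k, N ≤ e (k + 2)) : X ^ N ∣ altBinomSeries R d e - (1 - C (d : R) * X) := by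
  have htail : altBinomSeries R d e - (1 - C (d : R) * X) =
      ∑ k ∈ range d, (-1) ^ (k + 2) * (d.choose (k + 2) : R⟦X⟧) * X ^ e (k + 2) := by
    -- The index `d + 1` contributes `0`; including it lets `d = 0` be split like any other `d`.
    have hext : altBinomSeries R d e =
        ∑ k ∈ range (d + 2), (-1) ^ k * (d.choose k : R⟦X⟧) * X ^ e k := by
      simp [altBinomSeries, sum_range_succ _ (d + 1)]
    rw [sub_eq_iff_eq_add, hext, sum_range_succ', sum_range_succ', add_assoc]
    simp [h0, h1, neg_add_eq_sub]
  rw [htail]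
  exact dvd_sum fun k _ ↦ (pow_dvd_pow X (hN k)).mul_left _

theorem altBinomSeries_pow_sub_one {p : ℕ} (hp : p - 1 ≠ 0) (d : ℕ) :
    altBinomSeries R d (fun k ↦ p ^ k - 1) =
      expand (p - 1) hp (altBinomSeries R d fun k ↦ ∑ i ∈ range k, p ^ i) := by
  have hexp (k : ℕ) : p ^ k - 1 = (p - 1) * ∑ i ∈ range k, p ^ i := by
    rw [mul_comm, geom_sum_mul_of_one_le (by lia)]
  simp only [expand_altBinomSeries, hexp]

theorem X_pow_dvd_altBinomSeries_geom_sum_sub (d p : ℕ) :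
    X ^ (p + 1) ∣
      altBinomSeries R d (fun k ↦ ∑ i ∈ range k, p ^ i) - (1 - C (d : R) * X) := by
  refine X_pow_dvd_altBinomSeries_sub d (by simp) (by simp) fun k ↦ ?_
  calc p + 1 = ∑ i ∈ range 2, p ^ i := geom_sum_two.symm
    _ ≤ ∑ i ∈ range (k + 2), p ^ i := sum_le_sum_of_subset (range_mono (by lia))

theorem statement_12_general (d p : ℕ) (hp : 2 ≤ p) (φ : R⟦X⟧)
    (hφ : (∑ k ∈ range (d + 1), (-1) ^ k * (d.choose k : R⟦X⟧) * X ^ (p ^ k - 1)) * φ = 1) :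
    (∀ n, ¬ (p - 1) ∣ n → coeff n φ = 0) ∧
    (∀ n, n < p ^ 2 - 1 → (p - 1) ∣ n → coeff n φ = (d : R) ^ (n / (p - 1))) := by
  have hp' : p - 1 ≠ 0 := by lia
  change altBinomSeries R d (fun k ↦ p ^ k - 1) * φ = 1 at hφ
  rw [altBinomSeries_pow_sub_one hp'] at hφ
  obtain ⟨ψ, hψ, rfl⟩ := exists_expand_eq_of_expand_mul_eq_one hp' hφ
  refine ⟨fun n hn ↦ coeff_expand_of_not_dvd _ hp' _ hn, fun n hn hdvd ↦ ?_⟩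
  have hlt : n / (p - 1) < p + 1 := by
    apply Nat.div_lt_of_lt_mul
    rwa [mul_comm, ← Nat.sq_sub_sq, one_pow]
  rw [coeff_expand, if_pos hdvd]
  exact coeff_eq_pow_of_X_pow_dvd_of_mul_eq_one
    (X_pow_dvd_altBinomSeries_geom_sum_sub d p) hψ hlt

end

/-- For `d ≥ 1`, `p ≥ 2`, let `P(z) = ∑_{k=0}^{d} (-1)^k C(d,k) z^{p^k - 1}`
in `ℚ⟦z⟧`, let `φ_{d,p}` be its multiplicative inverse, and let `a_n` be the coefficient of
`z^n` in `φ_{d,p}`.  Then (i) `a_n = 0` whenever `(p-1) ∤ n` (so `φ_{d,p}` is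
`(p-1)`-periodic), and (ii) `a_n = d^{n/(p-1)}` for every `n` with `0 ≤ n < p^2 - 1` and
`(p-1) ∣ n`. -/
theorem statement_12 (d p : ℕ) (hd : 1 ≤ d) (hp : 2 ≤ p)
    (P φ : PowerSeries ℚ)
    (hP : P = ∑ k ∈ Finset.range (d + 1),
        (-1 : PowerSeries ℚ) ^ k * (d.choose k : PowerSeries ℚ) * PowerSeries.X ^ (p ^ k - 1))
    (hφ : P * φ = 1) :
    (∀ n : ℕ, ¬ (p - 1) ∣ n → PowerSeries.coeff n φ = 0) ∧
    (∀ n : ℕ, n < p ^ 2 - 1 → (p - 1) ∣ n →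
      PowerSeries.coeff n φ = (d : ℚ) ^ (n / (p - 1))) := by
  subst hP
  exact statement_12_general d p hp φ hφ
end

section
/- For all integers d ≥ 1 and p ≥ 2: q_{d,p}(1) = 0, so the set of positive real roots of q_{d,p} is nonempty and has a least element r ∈ (0,1]; and there exists a unique s ∈ (0, r) with q_{d,p}'(s) = 0. -/
/-!
Along the orbit `z m = exp (-p ^ m)`, `m : ℤ`, of the map `z ↦ z ^ p`, the values of `q_{d,p}` are,
up to a global sign, the `d`-th forward differences of the monotone sequence `-z`, which converges
at both ends. Each further difference of an alternating sequence vanishing at both ends has one more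
sign change, so `q_{d,p}` has `d - 1` zeros in `(0, 1)`, besides the zero at `1`. By Rolle, `q'` has
at least `d - 1` zeros beyond the least positive root `r` of `q`; since `q'` has only `d + 1` terms,
Descartes' rule of signs leaves room for a single zero in `(0, r)`, where Rolle on `[0, r]` provides
one.
-/

open Filter Finset Polynomial Topology

section PositiveRoots

theorem signVariations_le_card_support_sub_one {R : Type*} [Semiring R] [LinearOrder R]
    (P : R[X]) : P.signVariations ≤ #P.support - 1 := by
  induction h : #P.support using Nat.strong_induction_on generalizing P with
  | _ n ih =>
    subst h
    rcases le_or_gt #P.support 1 with hP | hP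
    · obtain ⟨n, c, rfl⟩ := card_support_le_one_iff_monomial.mp hP
      simp
    · have hne : P ≠ 0 := fun h ↦ by simp [h] at hP
      have herase := ih _ (eraseLead_support_card_lt hne) P.eraseLead rfl
      rw [card_support_eraseLead] at herase
      have hstep := P.signVariations_le_eraseLead_succ
      omega

/-- The finite set of positive roots of a polynomial, without multiplicity; empty for `P = 0`. -/
noncomputable def posRoots {R : Type*} [CommRing R] [IsDomain R] [LinearOrder R] (P : R[X]) :
    Finset R :=
  {x ∈ P.roots.toFinset | 0 < x}

theorem mem_posRoots {R : Type*} [CommRing R] [IsDomain R] [LinearOrder R] {P : R[X]} {x : R} :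
    x ∈ posRoots P ↔ 0 < x ∧ P ≠ 0 ∧ P.IsRoot x := by
  rw [posRoots, mem_filter, Multiset.mem_toFinset, mem_roots', and_comm]

theorem card_posRoots_le_card_support_sub_one {R : Type*} [CommRing R] [LinearOrder R]
    [IsStrictOrderedRing R] (P : R[X]) : #(posRoots P) ≤ #P.support - 1 :=
  calc #(posRoots P) = #(P.roots.filter (0 < ·)).toFinset := by
        rw [posRoots, Multiset.toFinset_filter]
    _ ≤ P.roots.countP (0 < ·) := by
        rw [Multiset.countP_eq_card_filter]
        exact Multiset.toFinset_card_le _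
    _ ≤ P.signVariations := P.roots_countP_pos_le_signVariations
    _ ≤ #P.support - 1 := signVariations_le_card_support_sub_one P

theorem card_support_derivative_le {R : Type*} [Semiring R] (P : R[X]) :
    #(derivative P).support ≤ #P.support :=
  card_le_card_of_injOn (· + 1) (fun _ h ↦ of_mem_support_derivative h)
    (add_left_injective 1).injOn

theorem exists_derivative_isRoot_of_isRoot {P : ℝ[X]} {a b : ℝ} (hab : a < b)
    (ha : P.IsRoot a) (hb : P.IsRoot b) : ∃ c ∈ Set.Ioo a b, P.derivative.IsRoot c := by
  obtain ⟨c, hc, hc0⟩ := exists_deriv_eq_zero hab P.continuousOn (ha.trans hb.symm)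
  exact ⟨c, hc, by rwa [IsRoot, ← P.deriv]⟩

variable {P : ℝ[X]} {r : ℝ}

theorem derivative_ne_zero_of_mem_posRoots {x : ℝ} (hx : x ∈ posRoots P) : derivative P ≠ 0 := by
  obtain ⟨-, hP, hroot⟩ := mem_posRoots.mp hx
  intro h
  rw [eq_C_of_derivative_eq_zero h, IsRoot, eval_C] at hroot
  exact hP (by rw [eq_C_of_derivative_eq_zero h, hroot, C_0])

theorem card_posRoots_le_card_posRoots_derivative_gt (hr : ∀ x ∈ posRoots P, r ≤ x) :
    #(posRoots P) ≤ #{x ∈ posRoots (derivative P) | r < x} + 1 := by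
  refine card_le_of_interleaved fun x hx y hy hxy _ ↦ ?_
  obtain ⟨c, ⟨hxc, hcy⟩, hc⟩ :=
    exists_derivative_isRoot_of_isRoot hxy (mem_posRoots.mp hx).2.2 (mem_posRoots.mp hy).2.2
  have hc0 : 0 < c := (mem_posRoots.mp hx).1.trans hxc
  have hc_mem := mem_posRoots.mpr ⟨hc0, derivative_ne_zero_of_mem_posRoots hx, hc⟩
  exact ⟨c, mem_filter.mpr ⟨hc_mem, (hr x hx).trans_lt hxc⟩, hxc, hcy⟩

theorem card_posRoots_derivative_lt_le_one (hr : ∀ x ∈ posRoots P, r ≤ x)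
    (hcard : #P.support ≤ #(posRoots P) + 1) :
    #{x ∈ posRoots (derivative P) | x < r} ≤ 1 := by
  have hgt := card_posRoots_le_card_posRoots_derivative_gt hr
  have hdisj : Disjoint {x ∈ posRoots (derivative P) | x < r}
      {x ∈ posRoots (derivative P) | r < x} :=
    disjoint_filter.mpr fun _ _ ↦ lt_asymm
  have htotal := card_le_card (union_subset (filter_subset (· < r) (posRoots (derivative P)))
    (filter_subset (r < ·) (posRoots (derivative P))))
  rw [card_union_of_disjoint hdisj] at htotal
  have hdescartes := card_posRoots_le_card_support_sub_one (derivative P)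
  have hsupport := card_support_derivative_le P
  omega

/-- The cardinality hypothesis says that `P` has as many positive roots as Descartes' rule of signs
allows for its number of terms. -/
theorem existsUnique_derivative_isRoot_of_card_support_le (h0 : P.IsRoot 0)
    (hr : IsLeast (posRoots P : Set ℝ) r) (hcard : #P.support ≤ #(posRoots P) + 1) :
    ∃! s, s ∈ Set.Ioo 0 r ∧ P.derivative.IsRoot s := by
  obtain ⟨hr0, -, hPr⟩ := mem_posRoots.mp hr.1
  have hP := derivative_ne_zero_of_mem_posRoots hr.1
  obtain ⟨s, hs, hs0⟩ := exists_derivative_isRoot_of_isRoot hr0 h0 hPr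
  refine ⟨s, ⟨hs, hs0⟩, fun t ⟨ht, ht0⟩ ↦ ?_⟩
  exact card_le_one.mp (card_posRoots_derivative_lt_le_one hr.2 hcard)
    t (mem_filter.mpr ⟨mem_posRoots.mpr ⟨ht.1, hP, ht0⟩, ht.2⟩)
    s (mem_filter.mpr ⟨mem_posRoots.mpr ⟨hs.1, hP, hs0⟩, hs.2⟩)

end PositiveRoots

section Alternation

/-- A finite sequence of nonzero terms with strictly alternating signs, the first one positive. -/
def IsAlternating {R : Type*} [Ring R] [LT R] {n : ℕ} (u : Fin n → R) : Prop :=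
  ∀ i : Fin n, 0 < (-1) ^ (i : ℕ) * u i

theorem exists_fwdDiff_pos_of_lt {R : Type*} [AddCommGroup R] [LinearOrder R]
    [IsOrderedAddMonoid R] {f : ℤ → R} {a b : ℤ} (hab : a < b) (h : f a < f b) :
    ∃ c, a ≤ c ∧ c < b ∧ 0 < fwdDiff 1 f c := by
  by_contra! hneg
  refine h.not_ge (antitoneOn_of_add_one_le Set.ordConnected_Icc (fun c _ hc hc' ↦ ?_)
    (Set.left_mem_Icc.mpr hab.le) (Set.right_mem_Icc.mpr hab.le) hab.le)
  exact sub_nonpos.mp (hneg c hc.1 (Int.lt_of_add_one_le hc'.2))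

theorem exists_isAlternating_fwdDiff {R : Type*} [Ring R] [LinearOrder R] [IsStrictOrderedRing R]
    {f : ℤ → R} {n : ℕ} {t : Fin (n + 1) → ℤ} (ht : StrictMono t)
    (h : IsAlternating fun i : Fin n ↦ f (t i.succ) - f (t i.castSucc)) :
    ∃ m : Fin n → ℤ, StrictMono m ∧ IsAlternating (fwdDiff 1 f ∘ m) := by
  have hstep (i : Fin n) : ∃ c, t i.castSucc ≤ c ∧ c < t i.succ ∧
      0 < fwdDiff 1 (fun k ↦ (-1) ^ (i : ℕ) * f k) c := by
    refine exists_fwdDiff_pos_of_lt (ht i.castSucc_lt_succ) (sub_pos.mp ?_)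
    rw [← mul_sub]
    exact h i
  choose m hm_ge hm_lt hm_pos using hstep
  refine ⟨m, fun i j hij ↦ ?_, fun i ↦ ?_⟩
  · exact (hm_lt i).trans_le ((ht.monotone (Fin.succ_le_castSucc_iff.mpr hij)).trans (hm_ge j))
  · simpa only [fwdDiff, Function.comp_apply, mul_sub] using hm_pos i

section Tendsto

variable {M G : Type*} [AddCommMonoid M] [AddCommGroup G] [TopologicalSpace G] [ContinuousSub G]
  {f : M → G} {l : Filter M} {h : M} {c : G}

theorem tendsto_fwdDiff_zero (hl : Tendsto (· + h) l l) (hf : Tendsto f l (𝓝 c)) :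
    Tendsto (fwdDiff h f) l (𝓝 0) := by
  have hsub := (hf.comp hl).sub hf
  rwa [sub_self] at hsub

theorem tendsto_fwdDiff_iterate_succ_zero (hl : Tendsto (· + h) l l) (hf : Tendsto f l (𝓝 c))
    (n : ℕ) : Tendsto ((fwdDiff h)^[n + 1] f) l (𝓝 0) := by
  induction n with
  | zero => exact tendsto_fwdDiff_zero hl hf
  | succ n ih =>
    rw [Function.iterate_succ_apply']
    exact tendsto_fwdDiff_zero hl ih

end Tendsto

theorem forall_adjacent_cons_snoc {α : Type*} {r : ℕ → α → α → Prop} {n : ℕ}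
    {m : Fin (n + 1) → α} {a b : α} (hfirst : r 0 a (m 0))
    (hmid : ∀ i : Fin n, r (i + 1) (m i.castSucc) (m i.succ))
    (hlast : r (n + 1) (m (Fin.last n)) b) (i : Fin (n + 2)) :
    let t : Fin (n + 3) → α := Fin.cons a (Fin.snoc m b : Fin (n + 2) → α)
    r i (t i.castSucc) (t i.succ) := by
  intro t
  have hcons (j : Fin (n + 2)) : t j.succ = (Fin.snoc m b : Fin (n + 2) → α) j := rfl
  cases i using Fin.cases with
  | zero => exact hfirst
  | succ i =>
    rw [← Fin.succ_castSucc, hcons, hcons, Fin.snoc_castSucc]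
    cases i using Fin.lastCases with
    | last => simpa only [Fin.succ_last, Fin.snoc_last, Fin.val_last] using hlast
    | cast i =>
      simpa only [Fin.succ_castSucc, Fin.snoc_castSucc, Fin.val_castSucc, Fin.val_succ] using hmid i

section OrderTopology

variable {R : Type*} [Ring R] [LinearOrder R] [IsStrictOrderedRing R] [TopologicalSpace R]
  [OrderTopology R] {f : ℤ → R}

theorem exists_isAlternating_increments {n : ℕ} {m : Fin (n + 1) → ℤ} (hm : StrictMono m)
    (h : IsAlternating (f ∘ m)) (hbot : Tendsto f atBot (𝓝 0)) (htop : Tendsto f atTop (𝓝 0)) :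
    ∃ t : Fin (n + 3) → ℤ, StrictMono t ∧
      IsAlternating fun i : Fin (n + 2) ↦ f (t i.succ) - f (t i.castSucc) := by
  have hfirst : 0 < f (m 0) := by simpa using h 0
  have hlast : 0 < (-1) ^ n * f (m (Fin.last n)) := h (Fin.last n)
  obtain ⟨a, ham, hfa⟩ :=
    ((eventually_lt_atBot (m 0)).and (hbot.eventually_lt_const hfirst)).exists
  have htop_signed : Tendsto (fun k ↦ (-1) ^ n * f k) atTop (𝓝 0) := by
    rcases neg_one_pow_eq_or R n with hn | hn
    · simpa [hn] using htop
    · simpa [hn] using htop.neg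
  obtain ⟨b, hmb, hfb⟩ :=
    ((eventually_gt_atTop (m (Fin.last n))).and (htop_signed.eventually_lt_const hlast)).exists
  let t : Fin (n + 3) → ℤ := Fin.cons a (Fin.snoc m b : Fin (n + 2) → ℤ)
  have hstep : ∀ i : Fin (n + 2), t i.castSucc < t i.succ ∧
      0 < (-1) ^ (i : ℕ) * (f (t i.succ) - f (t i.castSucc)) := by
    refine forall_adjacent_cons_snoc (r := fun i k l ↦ k < l ∧ 0 < (-1) ^ i * (f l - f k))
      ⟨ham, by simpa using hfa⟩ (fun i ↦ ⟨hm i.castSucc_lt_succ, ?_⟩) ⟨hmb, ?_⟩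
    · have hleft : 0 < (-1) ^ (i : ℕ) * f (m i.castSucc) := h i.castSucc
      have hright : 0 < (-1) ^ (i + 1 : ℕ) * f (m i.succ) := h i.succ
      simpa [pow_succ, mul_sub] using add_pos hright hleft
    · simpa [pow_succ, mul_sub] using hfb
  exact ⟨t, Fin.strictMono_iff_lt_succ.mpr fun i ↦ (hstep i).1, fun i ↦ (hstep i).2⟩

theorem exists_isAlternating_fwdDiff_iterate {a b : R} (hf : StrictMono f)
    (hbot : Tendsto f atBot (𝓝 a)) (htop : Tendsto f atTop (𝓝 b)) (n : ℕ) :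
    ∃ m : Fin (n + 1) → ℤ, StrictMono m ∧ IsAlternating ((fwdDiff 1)^[n + 1] f ∘ m) := by
  have hshift_bot : Tendsto (· + (1 : ℤ)) atBot atBot :=
    tendsto_atBot_add_const_right _ 1 tendsto_id
  have hshift_top : Tendsto (· + (1 : ℤ)) atTop atTop :=
    tendsto_atTop_add_const_right _ 1 tendsto_id
  induction n with
  | zero =>
    refine ⟨fun _ ↦ 0, Subsingleton.strictMono (α := Fin 1) _, fun i ↦ ?_⟩
    simpa [Fin.fin_one_eq_zero i, fwdDiff] using hf zero_lt_one
  | succ n ih =>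
    obtain ⟨m, hm, halt⟩ := ih
    obtain ⟨t, ht, hincr⟩ := exists_isAlternating_increments hm halt
      (tendsto_fwdDiff_iterate_succ_zero hshift_bot hbot n)
      (tendsto_fwdDiff_iterate_succ_zero hshift_top htop n)
    rw [Function.iterate_succ_apply']
    exact exists_isAlternating_fwdDiff ht hincr

end OrderTopology

theorem exists_strictMono_zeros_of_isAlternating {g : ℝ → ℝ} (hg : Continuous g) {n : ℕ}
    {u : Fin (n + 1) → ℝ} (hu : StrictMono u) (h : IsAlternating (g ∘ u)) :
    ∃ x : Fin n → ℝ, StrictMono x ∧ ∀ i, g (x i) = 0 := by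
  have hzero (i : Fin n) : ∃ c ∈ Set.Ioo (u i.castSucc) (u i.succ), g c = 0 := by
    have hleft : 0 < (-1) ^ (i : ℕ) * g (u i.castSucc) := h i.castSucc
    have hright : 0 < (-1) ^ (i + 1 : ℕ) * g (u i.succ) := h i.succ
    rw [pow_succ, mul_neg_one, neg_mul, neg_pos] at hright
    obtain ⟨c, hc, hgc⟩ := intermediate_value_Ioo' (hu i.castSucc_lt_succ).le
      (hg.const_mul ((-1) ^ (i : ℕ))).continuousOn ⟨hright, hleft⟩
    exact ⟨c, hc, by simpa using hgc⟩
  choose x hx hgx using hzero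
  exact ⟨x, fun i j hij ↦ (hx i).2.trans_le
    ((hu.monotone (Fin.succ_le_castSucc_iff.mpr hij)).trans (hx j).1.le), hgx⟩

end Alternation

section ExpNegRpow

/-- The point `exp (-p ^ t)` of `(0, 1)`: in the parameter `t`, raising to the power `p` becomes the
translation `t ↦ t + 1`. -/
noncomputable def expNegRpow (p t : ℝ) : ℝ :=
  Real.exp (-p ^ t)

variable {p : ℝ}

theorem expNegRpow_pos (p t : ℝ) : 0 < expNegRpow p t :=
  Real.exp_pos _

theorem expNegRpow_lt_one (hp : 0 < p) (t : ℝ) : expNegRpow p t < 1 :=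
  Real.exp_lt_one_iff.mpr (neg_neg_of_pos (Real.rpow_pos_of_pos hp t))

theorem expNegRpow_strictAnti (hp : 1 < p) : StrictAnti (expNegRpow p) := fun _ _ h ↦
  Real.exp_lt_exp.mpr (neg_lt_neg (Real.rpow_lt_rpow_of_exponent_lt hp h))

theorem continuous_expNegRpow (hp : 0 < p) : Continuous (expNegRpow p) :=
  Real.continuous_exp.comp (Real.continuous_const_rpow hp.ne').neg

theorem expNegRpow_pow_pow {p : ℕ} (hp : p ≠ 0) (t : ℝ) (k : ℕ) :
    expNegRpow p t ^ p ^ k = expNegRpow p (t + k) := by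
  rw [expNegRpow, expNegRpow, ← Real.exp_nat_mul, Real.rpow_add_natCast (Nat.cast_ne_zero.mpr hp)]
  push_cast
  ring_nf

theorem tendsto_expNegRpow_atTop (hp : 1 < p) : Tendsto (expNegRpow p) atTop (𝓝 0) :=
  Real.tendsto_exp_neg_atTop_nhds_zero.comp (tendsto_rpow_atTop_of_base_gt_one p hp)

theorem tendsto_expNegRpow_atBot (hp : 1 < p) : Tendsto (expNegRpow p) atBot (𝓝 1) := by
  have h := (tendsto_rpow_atBot_of_base_gt_one p hp).neg.rexp
  rwa [neg_zero, Real.exp_zero] at h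

end ExpNegRpow

section BinomialLacunary

/-- The polynomial `q_{d,p} = ∑ k ≤ d, (-1) ^ k * d.choose k * X ^ p ^ k`. -/
noncomputable def binomialLacunary (d p : ℕ) : ℝ[X] :=
  ∑ k ∈ range (d + 1), monomial (p ^ k) ((-1) ^ k * (d.choose k : ℝ))

variable {d p : ℕ}

theorem eval_binomialLacunary (d p : ℕ) (z : ℝ) : (binomialLacunary d p).eval z =
    ∑ k ∈ range (d + 1), (-1 : ℝ) ^ k * (d.choose k : ℝ) * z ^ p ^ k := by
  simp only [binomialLacunary, eval_finsetSum, eval_monomial]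

theorem isRoot_binomialLacunary_zero (hp : p ≠ 0) : (binomialLacunary d p).IsRoot 0 := by
  simp [IsRoot, eval_binomialLacunary, hp]

theorem isRoot_binomialLacunary_one (hd : d ≠ 0) : (binomialLacunary d p).IsRoot 1 := by
  have h := Int.alternating_sum_range_choose_of_ne hd
  simp only [IsRoot, eval_binomialLacunary, one_pow, mul_one]
  exact_mod_cast h

theorem card_support_binomialLacunary_le (d p : ℕ) : #(binomialLacunary d p).support ≤ d + 1 := by
  have hsub : (binomialLacunary d p).support ⊆ (range (d + 1)).image (p ^ ·) := by
    intro n hn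
    rw [mem_support_iff, binomialLacunary, finsetSum_coeff] at hn
    obtain ⟨k, hk, hkn⟩ := exists_ne_zero_of_sum_ne_zero hn
    rw [coeff_monomial, ne_eq, ite_eq_right_iff, Classical.not_imp] at hkn
    exact mem_image.mpr ⟨k, hk, hkn.1⟩
  simpa using (card_le_card hsub).trans card_image_le

theorem binomialLacunary_ne_zero (hp : 2 ≤ p) : binomialLacunary d p ≠ 0 := by
  have hcoeff : (binomialLacunary d p).coeff 1 = 1 := by
    simp [binomialLacunary, finsetSum_coeff, coeff_monomial, show p ≠ 1 by omega]
  exact fun h ↦ by simp [h] at hcoeff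

theorem eval_binomialLacunary_expNegRpow (hp : p ≠ 0) (m : ℤ) :
    (binomialLacunary d p).eval (expNegRpow p m) =
      (-1) ^ (d + 1) * (fwdDiff 1)^[d] (fun n : ℤ ↦ -expNegRpow p n) m := by
  rw [eval_binomialLacunary, fwdDiff_iter_eq_sum_shift, mul_sum]
  refine sum_congr rfl fun k hk ↦ ?_
  obtain ⟨j, rfl⟩ := Nat.exists_eq_add_of_le (mem_range_succ_iff.mp hk)
  have hsign : (-1 : ℝ) ^ k = (-1) ^ (k + j) * (-1) ^ j := by
    rw [pow_add, mul_assoc, ← mul_pow]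
    simp
  rw [expNegRpow_pow_pow hp, hsign, Nat.add_sub_cancel_left]
  simp only [zsmul_eq_mul, nsmul_eq_mul]
  push_cast
  ring_nf

theorem exists_strictMono_isRoot_binomialLacunary_expNegRpow (hp : 2 ≤ p) (n : ℕ) :
    ∃ x : Fin n → ℝ, StrictMono x ∧
      ∀ i, (binomialLacunary (n + 1) p).IsRoot (expNegRpow p (x i)) := by
  have hp1 : (1 : ℝ) < p := by exact_mod_cast hp
  obtain ⟨m, hm, halt⟩ := exists_isAlternating_fwdDiff_iterate (f := fun k : ℤ ↦ -expNegRpow p k)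
    (fun _ _ h ↦ neg_lt_neg (expNegRpow_strictAnti hp1 (Int.cast_lt.mpr h)))
    ((tendsto_expNegRpow_atBot hp1).comp (tendsto_intCast_atBot_iff.mpr tendsto_id)).neg
    ((tendsto_expNegRpow_atTop hp1).comp tendsto_intCast_atTop_atTop).neg n
  let g : ℝ → ℝ := fun t ↦ (-1) ^ (n + 2) * (binomialLacunary (n + 1) p).eval (expNegRpow p t)
  have hg : Continuous g :=
    ((binomialLacunary (n + 1) p).continuous.comp (continuous_expNegRpow (by linarith))).const_mul _
  have hg_eq (k : ℤ) : g k = (fwdDiff 1)^[n + 1] (fun k : ℤ ↦ -expNegRpow p k) k := by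
    simp only [g]
    rw [eval_binomialLacunary_expNegRpow (by omega), ← mul_assoc, ← mul_pow]
    simp
  obtain ⟨x, hx, hgx⟩ := exists_strictMono_zeros_of_isAlternating hg
    (Int.cast_strictMono.comp hm) fun i ↦ by simpa only [Function.comp_apply, hg_eq] using halt i
  exact ⟨x, hx, fun i ↦ by simpa [g] using hgx i⟩

theorem le_card_posRoots_binomialLacunary (hd : d ≠ 0) (hp : 2 ≤ p) :
    d ≤ #(posRoots (binomialLacunary d p)) := by
  obtain ⟨n, rfl⟩ := Nat.exists_eq_succ_of_ne_zero hd
  obtain ⟨x, hx, hroot⟩ := exists_strictMono_isRoot_binomialLacunary_expNegRpow hp n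
  have hp1 : (1 : ℝ) < p := by exact_mod_cast hp
  have hne : binomialLacunary (n + 1) p ≠ 0 := binomialLacunary_ne_zero hp
  let S : Finset ℝ := univ.image (expNegRpow p ∘ x)
  have hS : #S = n := by
    rw [card_image_of_injective _ ((expNegRpow_strictAnti hp1).injective.comp hx.injective),
      card_univ, Fintype.card_fin]
  have hone : 1 ∉ S := by simp [S, (expNegRpow_lt_one (zero_lt_one.trans hp1) _).ne]
  calc n + 1 = #(insert 1 S) := by rw [card_insert_of_notMem hone, hS]
    _ ≤ #(posRoots (binomialLacunary (n + 1) p)) := card_le_card ?_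
  rw [insert_subset_iff, image_subset_iff]
  exact ⟨mem_posRoots.mpr ⟨one_pos, hne, isRoot_binomialLacunary_one hd⟩, fun i _ ↦
    mem_posRoots.mpr ⟨expNegRpow_pos _ _, hne, hroot i⟩⟩

end BinomialLacunary

/-- For all `d ≥ 1` and `p ≥ 2`, with
`q(z) = ∑_{k=0}^{d} (-1)^k C(d,k) z^{p^k}`: one has `q(1) = 0`, so the set of positive real
roots of `q` is nonempty and has a least element `r ∈ (0,1]`; and there exists a unique
`s ∈ (0, r)` with `q'(s) = 0`. -/
theorem statement_14 (d p : ℕ) (hd : 1 ≤ d) (hp : 2 ≤ p)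
    (q : ℝ → ℝ)
    (hq : ∀ z : ℝ, q z =
        ∑ k ∈ Finset.range (d + 1), (-1 : ℝ) ^ k * (d.choose k : ℝ) * z ^ p ^ k) :
    q 1 = 0 ∧
    ∃ r : ℝ, IsLeast {z : ℝ | 0 < z ∧ q z = 0} r ∧ r ≤ 1 ∧
      ∃! s : ℝ, s ∈ Set.Ioo 0 r ∧ deriv q s = 0 := by
  obtain rfl : q = fun z ↦ (binomialLacunary d p).eval z :=
    funext fun z ↦ (hq z).trans (eval_binomialLacunary d p z).symm
  have hone : (binomialLacunary d p).IsRoot 1 := isRoot_binomialLacunary_one (by omega)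
  have hne : binomialLacunary d p ≠ 0 := binomialLacunary_ne_zero hp
  have hset : {z | 0 < z ∧ (binomialLacunary d p).eval z = 0} =
      (posRoots (binomialLacunary d p) : Set ℝ) := by
    ext z
    simp [mem_posRoots, hne]
  have hone_mem : 1 ∈ posRoots (binomialLacunary d p) := mem_posRoots.mpr ⟨one_pos, hne, hone⟩
  have hr := isLeast_min' (posRoots (binomialLacunary d p)) ⟨1, hone_mem⟩
  have hcard : #(binomialLacunary d p).support ≤ #(posRoots (binomialLacunary d p)) + 1 :=
    (card_support_binomialLacunary_le d p).trans
      (Nat.succ_le_succ (le_card_posRoots_binomialLacunary (by omega) hp))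
  refine ⟨hone, _, hset ▸ hr, hr.2 hone_mem, ?_⟩
  simpa only [Polynomial.deriv, IsRoot.def] using existsUnique_derivative_isRoot_of_card_support_le
    (isRoot_binomialLacunary_zero (by omega)) hr hcard
end

section
/- Fix integers d ≥ 1 and p ≥ 2, and for n ≥ 1 let T⁺_{d,p,n} denote the (finite) set of interchange maximal trees with n leaves. Then the formal power series w = ∑_{n ≥ 1} |T⁺_{d,p,n}| · x^n in ℚ⟦x⟧ satisfies the functional equation ∑_{k=0}^{d} (−1)^k · binom(d,k) · w^{p^k} = x. -/
/-- A plane rooted full `p`-ary tree in which every internal node carries a label from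
`{1, …, d}` (encoded as `Fin d`) and has exactly `p` ordered children (indexed by `Fin p`);
leaves are unlabelled. -/
inductive LabelledPTree (d p : ℕ) : Type
  | leaf : LabelledPTree d p
  | node : Fin d → (Fin p → LabelledPTree d p) → LabelledPTree d p

namespace LabelledPTree

/-- The number of leaves of a tree. -/
def leavesCount {d p : ℕ} : LabelledPTree d p → ℕ
  | leaf => 1
  | node _ f => ∑ i : Fin p, leavesCount (f i)

/-- `Blocked j T` means that every path from the root of `T` to each leaf of `T` passes
through an internal node of `T` labelled `j` (the root itself counts). -/
def Blocked {d p : ℕ} (j : Fin d) : LabelledPTree d p → Prop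
  | leaf => False
  | node i f => i = j ∨ ∀ k : Fin p, Blocked j (f k)

/-- A tree is interchange maximal if it has no subtree `S` (rooted at an internal node,
including the tree itself) whose root is labelled `i` and for which there exists some `j > i`
such that every path from the root of `S` to each leaf of `S` passes through an internal node
of `S` labelled `j`. -/
def IsInterchangeMaximal {d p : ℕ} : LabelledPTree d p → Prop
  | leaf => True
  | node i f =>
      (∀ k : Fin p, IsInterchangeMaximal (f k)) ∧ ¬ ∃ j : Fin d, i < j ∧ Blocked j (node i f)

end LabelledPTree

/-!
Let `W A` be the generating function of the interchange maximal trees blocked by every label in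
`A`. A tree that no label blocks is a leaf, so inclusion–exclusion over the blocking labels gives
`∑ A, (-1) ^ #A * W A = X`, and it remains to see that `W A = (W ∅) ^ p ^ #A`, i.e. that
`W A = W (A \ {m}) ^ p` for `m = max A`.

A tree counted by `W A` has a root label `i ≥ m`; a `p`-tuple of trees counted by `W (A \ {m}) ^ p`
either has no common blocking label above `m`, or has a largest one `i > m`. The two classifications
agree at `i = m`. At `i > m` they count tuples of maximal trees commonly blocked by `A`,
respectively by `(A \ {m}) ∪ {i}`, and by no label above `i`. By inclusion–exclusion these two
counts agree as soon as the series `(W B) ^ p` depend only on `#B`. This holds by induction modulo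
powers of `X`, because `p`-th powers gain one order of `X`-adic precision when `p ≥ 2`.
-/

open PowerSeries

section SizeSeries

variable {α β ι : Type*} {R : Type*}

/-- The ordinary generating function `∑ n, #{a ∈ S | s a = n} Xⁿ` of a set `S` whose elements have
sizes given by `s`. The coefficients are meant for `s` with finite fibres; a coefficient counting
an infinite set is the junk value `0`. -/
noncomputable def sizeSeries (R : Type*) [Semiring R] (s : α → ℕ) (S : Set α) : R⟦X⟧ :=
  PowerSeries.mk fun n => ({a ∈ S | s a = n}.ncard : R)

section Semiring

variable [Semiring R]

theorem coeff_sizeSeries (s : α → ℕ) (S : Set α) (n : ℕ) :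
    coeff n (sizeSeries R s S) = ({a ∈ S | s a = n}.ncard : R) :=
  coeff_mk _ _

theorem sizeSeries_singleton (s : α → ℕ) (a : α) : sizeSeries R s {a} = X ^ s a := by
  ext n
  rw [coeff_sizeSeries, coeff_X_pow]
  split_ifs with h
  · have : {b ∈ ({a} : Set α) | s b = n} = {a} := by grind
    rw [this, Set.ncard_singleton, Nat.cast_one]
  · have : {b ∈ ({a} : Set α) | s b = n} = ∅ := by grind
    rw [this, Set.ncard_empty, Nat.cast_zero]

theorem sizeSeries_image (s : β → ℕ) {f : α → β} (hf : f.Injective) (S : Set α) :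
    sizeSeries R s (f '' S) = sizeSeries R (s ∘ f) S := by
  ext n
  have : {b ∈ f '' S | s b = n} = f '' {a ∈ S | (s ∘ f) a = n} := by
    simp only [Function.comp_apply]
    grind
  rw [coeff_sizeSeries, coeff_sizeSeries, this, Set.ncard_image_of_injective _ hf]

theorem X_dvd_sizeSeries {s : α → ℕ} {S : Set α} (h : ∀ a ∈ S, 0 < s a) :
    X ∣ sizeSeries R s S := by
  have : {a ∈ S | s a = 0} = ∅ := by grind
  rw [X_dvd_iff, ← coeff_zero_eq_constantCoeff_apply, coeff_sizeSeries, this, Set.ncard_empty,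
    Nat.cast_zero]

theorem sizeSeries_inter_add_sdiff {s : α → ℕ} (hs : ∀ n, {a | s a = n}.Finite) (S U : Set α) :
    sizeSeries R s (S ∩ U) + sizeSeries R s (S \ U) = sizeSeries R s S := by
  ext n
  have hinter : {a ∈ S ∩ U | s a = n} = {a ∈ S | s a = n} ∩ U := Set.ext fun _ => and_right_comm
  have hsdiff : {a ∈ S \ U | s a = n} = {a ∈ S | s a = n} \ U := Set.ext fun _ => and_right_comm
  rw [map_add]
  simp only [coeff_sizeSeries]
  rw [hinter, hsdiff, ← Nat.cast_add,
    Set.ncard_inter_add_ncard_sdiff_eq_ncard _ _ ((hs n).subset fun _ h => h.2)]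

theorem sizeSeries_biUnion {s : α → ℕ} (hs : ∀ n, {a | s a = n}.Finite) (F : Finset ι)
    {U : ι → Set α} (hU : (F : Set ι).PairwiseDisjoint U) :
    sizeSeries R s (⋃ i ∈ F, U i) = ∑ i ∈ F, sizeSeries R s (U i) := by
  ext n
  have hfiber : {a ∈ ⋃ i ∈ F, U i | s a = n} = ⋃ i ∈ (F : Set ι), {a ∈ U i | s a = n} := by
    ext a
    simp only [Set.mem_ofPred_eq, Set.mem_iUnion, Finset.mem_coe, exists_prop, ← and_assoc,
      exists_and_right]
  rw [map_sum]
  simp only [coeff_sizeSeries]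
  rw [hfiber, F.finite_toSet.ncard_biUnion (fun i _ => (hs n).subset fun _ h => h.2)
    (hU.mono fun _ _ h => h.1), finsum_mem_coe_finset, Nat.cast_sum]

end Semiring

theorem finite_setOf_sum_eq [Fintype ι] {s : α → ℕ} (hs : ∀ n, {a | s a = n}.Finite) (n : ℕ) :
    {t : ι → α | ∑ k, s (t k) = n}.Finite := by
  have hle : {a | s a ≤ n}.Finite := by
    have : {a | s a ≤ n} = ⋃ m ∈ Set.Iic n, {a | s a = m} := by
      ext a
      simp
    rw [this]
    exact (Set.finite_Iic n).biUnion fun m _ => hs m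
  refine (Set.Finite.pi' fun _ : ι => hle).subset fun t ht k => ?_
  exact (Finset.single_le_sum (f := fun k => s (t k)) (fun _ _ => Nat.zero_le _)
    (Finset.mem_univ k)).trans_eq ht

theorem sizeSeries_pi [CommSemiring R] [Fintype ι] {s : α → ℕ} (hs : ∀ n, {a | s a = n}.Finite)
    (S : ι → Set α) :
    sizeSeries R (fun t : ι → α => ∑ k, s (t k)) (Set.univ.pi S) = ∏ k, sizeSeries R s (S k) := by
  classical
  ext n
  set L := (Finset.univ : Finset ι).finsuppAntidiag n
  let V (l : ι →₀ ℕ) : Set (ι → α) := Set.univ.pi fun k => {a ∈ S k | s a = l k}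
  have hfiber : {t ∈ Set.univ.pi S | ∑ k, s (t k) = n} = ⋃ l ∈ (L : Set (ι →₀ ℕ)), V l := by
    ext t
    simp only [L, V, Set.mem_iUnion, Set.mem_univ_pi, Set.mem_ofPred_eq, Finset.mem_coe,
      Finset.mem_finsuppAntidiag, exists_prop]
    constructor
    · rintro ⟨htS, htn⟩
      exact ⟨Finsupp.equivFunOnFinite.symm fun k => s (t k), ⟨htn, Finset.subset_univ _⟩,
        fun k => ⟨htS k, rfl⟩⟩
    · rintro ⟨l, ⟨hln, -⟩, ht⟩
      exact ⟨fun k => (ht k).1, (Finset.sum_congr rfl fun k _ => (ht k).2).trans hln⟩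
  have hfin (l : ι →₀ ℕ) : (V l).Finite :=
    Set.Finite.pi fun k => (hs (l k)).subset fun _ h => h.2
  have hdisj : (L : Set (ι →₀ ℕ)).PairwiseDisjoint V := by
    intro l _ l' _ hne
    refine Set.disjoint_left.2 fun t ht ht' => hne (Finsupp.ext fun k => ?_)
    exact (ht k trivial).2.symm.trans (ht' k trivial).2
  have hcard (l : ι →₀ ℕ) : (V l).ncard = ∏ k, {a ∈ S k | s a = l k}.ncard := by
    simp only [V, Set.ncard_def, Set.encard_pi_eq_prod_encard, ENat.toNat_prod]
  rw [coeff_prod]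
  simp only [coeff_sizeSeries]
  rw [hfiber, L.finite_toSet.ncard_biUnion (fun l _ => hfin l) hdisj, finsum_mem_coe_finset]
  simp only [hcard, Nat.cast_sum, Nat.cast_prod, L]

theorem sizeSeries_sdiff_biUnion [CommRing R] {s : α → ℕ} (hs : ∀ n, {a | s a = n}.Finite)
    (S : Set α) (F : Finset ι) (U : ι → Set α) :
    sizeSeries R s (S \ ⋃ i ∈ F, U i) =
      ∑ C ∈ F.powerset, (-1) ^ C.card * sizeSeries R s (S ∩ ⋂ i ∈ C, U i) := by
  classical
  induction F using Finset.induction_on generalizing S with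
  | empty => simp
  | insert a F ha ih =>
    have hsplit : (S \ ⋃ i ∈ F, U i) \ U a = S \ ⋃ i ∈ insert a F, U i := by
      rw [Finset.set_biUnion_insert, Set.union_comm, Set.sdiff_sdiff]
    have hinter : (S \ ⋃ i ∈ F, U i) ∩ U a = (S ∩ U a) \ ⋃ i ∈ F, U i := by grind
    have h := sizeSeries_inter_add_sdiff (R := R) hs (S \ ⋃ i ∈ F, U i) (U a)
    rw [hsplit, hinter, ih S, ih (S ∩ U a)] at h
    have hinsert (C : Finset ι) (hC : C ∈ F.powerset) :
        (-1) ^ (insert a C).card * sizeSeries R s (S ∩ ⋂ i ∈ insert a C, U i) =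
          -((-1) ^ C.card * sizeSeries R s (S ∩ U a ∩ ⋂ i ∈ C, U i)) := by
      rw [Finset.card_insert_of_notMem fun haC => ha (Finset.mem_powerset.1 hC haC),
        Finset.set_biInter_insert, Set.inter_assoc]
      ring
    rw [Finset.sum_powerset_insert ha, Finset.sum_congr rfl hinsert, Finset.sum_neg_distrib, ← h]
    abel

end SizeSeries

theorem pow_succ_dvd_pow_sub_pow {S : Type*} [CommRing S] {x f g : S} {p n : ℕ} (hp : 2 ≤ p)
    (hf : x ∣ f) (hg : x ∣ g) (h : x ^ n ∣ f - g) : x ^ (n + 1) ∣ f ^ p - g ^ p := by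
  obtain ⟨m, rfl⟩ := Nat.exists_eq_add_of_le' hp
  have hsplit : f ^ (m + 2) - g ^ (m + 2) =
      (f ^ (m + 1) - g ^ (m + 1)) * f + (f - g) * (g ^ m * g) := by ring
  rw [hsplit, pow_succ]
  exact dvd_add (mul_dvd_mul (h.trans (sub_dvd_pow_sub_pow _ _ _)) hf)
    (mul_dvd_mul h (hg.mul_left _))

theorem eq_of_forall_X_pow_dvd_sub {R : Type*} [Ring R] {f g : R⟦X⟧}
    (h : ∀ n : ℕ, X ^ n ∣ f - g) : f = g := by
  ext n
  rw [← sub_eq_zero, ← map_sub]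
  exact X_pow_dvd_iff.1 (h (n + 1)) n n.lt_succ_self

namespace LabelledPTree

variable {d p : ℕ}

theorem leavesCount_pos (hp : p ≠ 0) (T : LabelledPTree d p) : 0 < T.leavesCount := by
  induction T with
  | leaf => exact one_pos
  | node _ t ih =>
    have : NeZero p := ⟨hp⟩
    exact Finset.sum_pos (fun k _ => ih k) Finset.univ_nonempty

theorem leavesCount_lt_leavesCount_node (hp : 2 ≤ p) (i : Fin d) (t : Fin p → LabelledPTree d p)
    (k : Fin p) : (t k).leavesCount < (node i t).leavesCount := by
  have : Nontrivial (Fin p) := Fin.nontrivial_iff_two_le.2 hp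
  obtain ⟨l, hl⟩ := exists_ne k
  exact Finset.single_lt_sum (f := fun k => (t k).leavesCount) hl (Finset.mem_univ k)
    (Finset.mem_univ l) (leavesCount_pos (by lia) _) fun _ _ _ => Nat.zero_le _

theorem finite_setOf_leavesCount_lt (hp : 2 ≤ p) (n : ℕ) :
    {T : LabelledPTree d p | T.leavesCount < n}.Finite := by
  induction n with
  | zero => simp
  | succ n ih =>
    refine ((Set.finite_singleton leaf).union (Set.finite_iUnion fun i : Fin d =>
      (Set.Finite.pi' fun _ : Fin p => ih).image (node i))).subset ?_
    rintro (_ | ⟨i, t⟩) hT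
    · exact Or.inl rfl
    · exact Or.inr (Set.mem_iUnion.2 ⟨i, t, fun k =>
        (leavesCount_lt_leavesCount_node hp i t k).trans_le (Nat.lt_succ_iff.1 hT), rfl⟩)

theorem finite_setOf_leavesCount_eq (hp : 2 ≤ p) (n : ℕ) :
    {T : LabelledPTree d p | T.leavesCount = n}.Finite :=
  (finite_setOf_leavesCount_lt hp (n + 1)).subset fun _ hT => Nat.lt_succ_of_le hT.le

theorem node_injective (i : Fin d) :
    (node i : (Fin p → LabelledPTree d p) → LabelledPTree d p).Injective :=
  fun _ _ h => (node.inj h).2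

/-- The interchange maximal trees in which every label of `A` blocks all root-to-leaf paths. -/
def maximalBlockedBy (p : ℕ) (A : Finset (Fin d)) : Set (LabelledPTree d p) :=
  {T | T.IsInterchangeMaximal ∧ ∀ j ∈ A, Blocked j T}

/-- The `p`-tuples of trees in which the label `j` blocks every component. -/
def commonlyBlocked (p : ℕ) (j : Fin d) : Set (Fin p → LabelledPTree d p) :=
  {t | ∀ k, Blocked j (t k)}

/-- The `p`-tuples of interchange maximal trees commonly blocked by `A` and by no label above `i`:
for `i ∉ A`, these are the tuples of children of the interchange maximal trees with root label `i`
that are blocked by `A`, or equivalently by `A ∪ {i}`. -/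
def admissibleChildren (p : ℕ) (A : Finset (Fin d)) (i : Fin d) :
    Set (Fin p → LabelledPTree d p) :=
  (Set.univ.pi fun _ => maximalBlockedBy p A) \ ⋃ j ∈ Finset.Ioi i, commonlyBlocked p j

theorem mem_admissibleChildren {A : Finset (Fin d)} {i : Fin d} {t : Fin p → LabelledPTree d p} :
    t ∈ admissibleChildren p A i ↔
      (∀ k, (t k).IsInterchangeMaximal) ∧ (∀ j ∈ A, t ∈ commonlyBlocked p j) ∧
        ∀ j, i < j → t ∉ commonlyBlocked p j := by
  simp only [admissibleChildren, maximalBlockedBy, commonlyBlocked, Set.mem_sdiff,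
    Set.mem_univ_pi, Set.mem_iUnion, Set.mem_ofPred_eq, Finset.mem_Ioi]
  grind

theorem node_mem_maximalBlockedBy {A : Finset (Fin d)} {i : Fin d}
    {t : Fin p → LabelledPTree d p} :
    node i t ∈ maximalBlockedBy p A ↔ t ∈ admissibleChildren p (A.erase i) i := by
  rw [mem_admissibleChildren]
  constructor
  · rintro ⟨⟨hmax, hroot⟩, hA⟩
    refine ⟨hmax, fun j hj => ?_, fun j hij hj => hroot ⟨j, hij, Or.inr hj⟩⟩
    exact (hA j (Finset.mem_of_mem_erase hj)).resolve_left (Finset.ne_of_mem_erase hj).symm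
  · rintro ⟨hmax, hA, hroot⟩
    refine ⟨⟨hmax, fun ⟨j, hij, hj⟩ => hroot j hij (hj.resolve_left hij.ne)⟩, fun j hj => ?_⟩
    exact (eq_or_ne i j).imp_right fun hij => hA j (Finset.mem_erase.2 ⟨hij.symm, hj⟩)

theorem le_of_mem_admissibleChildren {A : Finset (Fin d)} {i j : Fin d}
    {t : Fin p → LabelledPTree d p} (ht : t ∈ admissibleChildren p A i) (hj : j ∈ A) : j ≤ i := by
  rw [mem_admissibleChildren] at ht
  exact not_lt.1 fun hij => ht.2.2 j hij (ht.2.1 j hj)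

theorem maximalBlockedBy_eq_biUnion {A : Finset (Fin d)} {m : Fin d} (hm : IsGreatest A m) :
    maximalBlockedBy p A =
      ⋃ i ∈ Finset.Ici m, node i '' admissibleChildren p (A.erase i) i := by
  have hle {i : Fin d} {t : Fin p → LabelledPTree d p}
      (ht : t ∈ admissibleChildren p (A.erase i) i) : m ≤ i := by
    by_contra! him
    exact him.not_ge (le_of_mem_admissibleChildren ht (Finset.mem_erase.2 ⟨him.ne', hm.1⟩))
  ext (_ | ⟨i, t⟩)
  · simpa [maximalBlockedBy, Blocked, IsInterchangeMaximal] using ⟨m, hm.1⟩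
  · simpa [node_mem_maximalBlockedBy] using hle

theorem pairwiseDisjoint_image_node (F : Set (Fin d))
    (U : Fin d → Set (Fin p → LabelledPTree d p)) :
    F.PairwiseDisjoint fun i => node i '' U i := by
  intro i _ i' _ hne
  refine Set.disjoint_left.2 ?_
  rintro _ ⟨t, _, rfl⟩ ⟨t', _, h⟩
  exact hne (node.inj h).1.symm

theorem pi_maximalBlockedBy_inter_biInter_commonlyBlocked (A C : Finset (Fin d)) :
    (Set.univ.pi fun _ => maximalBlockedBy p A) ∩ ⋂ j ∈ C, commonlyBlocked p j =
      Set.univ.pi fun _ => maximalBlockedBy p (A ∪ C) := by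
  ext t
  simp only [maximalBlockedBy, commonlyBlocked, Set.mem_inter_iff, Set.mem_univ_pi,
    Set.mem_iInter, Set.mem_ofPred_eq, Finset.mem_union]
  grind

theorem pi_maximalBlockedBy_inter_biUnion_commonlyBlocked (A : Finset (Fin d)) (m : Fin d) :
    (Set.univ.pi fun _ => maximalBlockedBy p A) ∩ ⋃ j ∈ Finset.Ioi m, commonlyBlocked p j =
      ⋃ i ∈ Finset.Ioi m, admissibleChildren p (insert i A) i := by
  ext t
  simp only [Set.mem_inter_iff, Set.mem_iUnion, mem_admissibleChildren, Finset.mem_Ioi,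
    exists_prop, Finset.forall_mem_insert]
  constructor
  · rintro ⟨ht, j, hj⟩
    obtain ⟨i, hi⟩ := (Set.toFinite {j | m < j ∧ t ∈ commonlyBlocked p j}).exists_maximal ⟨j, hj⟩
    exact ⟨i, hi.prop.1, fun k => (ht k trivial).1,
      ⟨hi.prop.2, fun j hj k => (ht k trivial).2 j hj⟩,
      fun j hij hj => hi.not_gt ⟨hi.prop.1.trans hij, hj⟩ hij⟩
  · rintro ⟨i, hmi, hmax, ⟨hi, hA⟩, -⟩
    exact ⟨fun k _ => ⟨hmax k, fun j hj => hA j hj k⟩, i, hmi, hi⟩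

theorem pairwiseDisjoint_admissibleChildren_insert (A F : Finset (Fin d)) :
    (F : Set (Fin d)).PairwiseDisjoint fun i => admissibleChildren p (insert i A) i := by
  intro i _ i' _ hne
  refine Set.disjoint_left.2 fun t ht ht' => ?_
  rw [mem_admissibleChildren] at ht ht'
  rcases hne.lt_or_gt with h | h
  · exact ht.2.2 i' h (ht'.2.1 i' (Finset.mem_insert_self _ _))
  · exact ht'.2.2 i h (ht.2.1 i (Finset.mem_insert_self _ _))

theorem maximalBlockedBy_empty_sdiff_biUnion :
    maximalBlockedBy p (∅ : Finset (Fin d)) \ ⋃ j ∈ Finset.univ, {T | Blocked j T} = {leaf} := by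
  ext (_ | ⟨i, t⟩)
  · simp [maximalBlockedBy, IsInterchangeMaximal, Blocked]
  · simp only [Set.mem_sdiff, Set.mem_iUnion, Set.mem_ofPred_eq, Set.mem_singleton_iff,
      reduceCtorEq, iff_false, not_and, not_not]
    exact fun _ => ⟨i, Finset.mem_univ i, Or.inl rfl⟩

section Series

variable (R : Type*) [CommRing R]

/-- The generating function, by number of leaves, of the interchange maximal trees blocked by
every label of `A`. -/
noncomputable def maximalSeries (p : ℕ) (A : Finset (Fin d)) : R⟦X⟧ :=
  sizeSeries R leavesCount (maximalBlockedBy p A)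

/-- The generating function, by total number of leaves, of `admissibleChildren p A i`. -/
noncomputable def childrenSeries (p : ℕ) (A : Finset (Fin d)) (i : Fin d) : R⟦X⟧ :=
  sizeSeries R (fun t => ∑ k, (t k).leavesCount) (admissibleChildren p A i)

variable {R}

theorem X_dvd_maximalSeries (hp : p ≠ 0) (A : Finset (Fin d)) : X ∣ maximalSeries R p A :=
  X_dvd_sizeSeries fun T _ => leavesCount_pos hp T

theorem sizeSeries_pi_maximalBlockedBy (hp : 2 ≤ p) (A : Finset (Fin d)) :
    sizeSeries R (fun t => ∑ k, (t k).leavesCount)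
      (Set.univ.pi fun _ : Fin p => maximalBlockedBy p A) = maximalSeries R p A ^ p := by
  rw [sizeSeries_pi (finite_setOf_leavesCount_eq hp), Finset.prod_const, Finset.card_univ,
    Fintype.card_fin, maximalSeries]

theorem childrenSeries_eq_sum (hp : 2 ≤ p) (A : Finset (Fin d)) (i : Fin d) :
    childrenSeries R p A i =
      ∑ C ∈ (Finset.Ioi i).powerset, (-1) ^ C.card * maximalSeries R p (A ∪ C) ^ p := by
  rw [childrenSeries, admissibleChildren,
    sizeSeries_sdiff_biUnion (finite_setOf_sum_eq (finite_setOf_leavesCount_eq hp))]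
  simp only [pi_maximalBlockedBy_inter_biInter_commonlyBlocked,
    sizeSeries_pi_maximalBlockedBy hp]

theorem maximalSeries_eq_add_sum (hp : 2 ≤ p) {A : Finset (Fin d)} {m : Fin d}
    (hm : IsGreatest A m) :
    maximalSeries R p A =
      childrenSeries R p (A.erase m) m + ∑ i ∈ Finset.Ioi m, childrenSeries R p A i := by
  have hnotMem (i : Fin d) (hi : i ∈ Finset.Ioi m) : i ∉ A :=
    fun hiA => (hm.2 hiA).not_gt (Finset.mem_Ioi.1 hi)
  calc maximalSeries R p A
      = ∑ i ∈ Finset.Ici m, childrenSeries R p (A.erase i) i := by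
        rw [maximalSeries, maximalBlockedBy_eq_biUnion hm,
          sizeSeries_biUnion (finite_setOf_leavesCount_eq hp) _ (pairwiseDisjoint_image_node _ _)]
        exact Finset.sum_congr rfl fun i _ => sizeSeries_image _ (node_injective i) _
    _ = childrenSeries R p (A.erase m) m +
          ∑ i ∈ Finset.Ioi m, childrenSeries R p (A.erase i) i := by
        rw [← Finset.Ioi_insert, Finset.sum_insert Finset.notMem_Ioi_self]
    _ = _ := by
        congr 1
        exact Finset.sum_congr rfl fun i hi => by rw [Finset.erase_eq_of_notMem (hnotMem i hi)]

theorem maximalSeries_pow_eq_add_sum (hp : 2 ≤ p) (A : Finset (Fin d)) (m : Fin d) :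
    maximalSeries R p A ^ p =
      childrenSeries R p A m + ∑ i ∈ Finset.Ioi m, childrenSeries R p (insert i A) i := by
  have hfin := finite_setOf_sum_eq (ι := Fin p) (finite_setOf_leavesCount_eq (d := d) hp)
  rw [← sizeSeries_pi_maximalBlockedBy hp, ← sizeSeries_inter_add_sdiff hfin _
      (⋃ j ∈ Finset.Ioi m, commonlyBlocked p j),
    pi_maximalBlockedBy_inter_biUnion_commonlyBlocked,
    sizeSeries_biUnion hfin _ (pairwiseDisjoint_admissibleChildren_insert A _), add_comm]
  rfl

section CardInvariance

variable {S : Type*} [CommRing S] (φ : R⟦X⟧ →+* S)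

theorem map_childrenSeries_eq_of_card_eq (hp : 2 ≤ p)
    (hφ : ∀ A B : Finset (Fin d), A.card = B.card →
      φ (maximalSeries R p A) ^ p = φ (maximalSeries R p B) ^ p)
    {A B : Finset (Fin d)} {i : Fin d} (hA : A ⊆ Finset.Iic i) (hB : B ⊆ Finset.Iic i)
    (hAB : A.card = B.card) : φ (childrenSeries R p A i) = φ (childrenSeries R p B i) := by
  have hdisj : Disjoint (Finset.Iic i) (Finset.Ioi i) :=
    Finset.disjoint_left.2 fun _ hj hj' => (Finset.mem_Iic.1 hj).not_gt (Finset.mem_Ioi.1 hj')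
  have hcard {D C : Finset (Fin d)} (hD : D ⊆ Finset.Iic i) (hC : C ∈ (Finset.Ioi i).powerset) :
      (D ∪ C).card = D.card + C.card :=
    Finset.card_union_of_disjoint (hdisj.mono hD (Finset.mem_powerset.1 hC))
  simp only [childrenSeries_eq_sum hp, map_sum, map_mul, map_pow]
  refine Finset.sum_congr rfl fun C hC => ?_
  rw [hφ (A ∪ C) (B ∪ C) (by rw [hcard hA hC, hcard hB hC, hAB])]

theorem map_maximalSeries_eq_map_pow (hp : 2 ≤ p)
    (hφ : ∀ A B : Finset (Fin d), A.card = B.card →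
      φ (maximalSeries R p A) ^ p = φ (maximalSeries R p B) ^ p)
    {A : Finset (Fin d)} {m : Fin d} (hm : IsGreatest A m) :
    φ (maximalSeries R p A) = φ (maximalSeries R p (A.erase m)) ^ p := by
  have hle : A ⊆ Finset.Iic m := fun j hj => Finset.mem_Iic.2 (hm.2 hj)
  rw [← map_pow, maximalSeries_eq_add_sum hp hm, maximalSeries_pow_eq_add_sum hp _ m]
  simp only [map_add, map_sum]
  congr 1
  refine Finset.sum_congr rfl fun i hi => ?_
  have hmi : m < i := Finset.mem_Ioi.1 hi
  have hA : A ⊆ Finset.Iic i := hle.trans (Finset.Iic_subset_Iic.2 hmi.le)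
  have hi_notMem : i ∉ A.erase m := fun h => (hm.2 (Finset.mem_of_mem_erase h)).not_gt hmi
  refine map_childrenSeries_eq_of_card_eq φ hp hφ hA ?_ ?_
  · exact Finset.insert_subset (Finset.mem_Iic.2 le_rfl) ((A.erase_subset m).trans hA)
  · rw [Finset.card_insert_of_notMem hi_notMem, Finset.card_erase_add_one hm.1]

end CardInvariance

theorem X_pow_dvd_maximalSeries_sub (hp : 2 ≤ p) (n : ℕ) {A B : Finset (Fin d)}
    (hAB : A.card = B.card) : X ^ n ∣ maximalSeries R p A - maximalSeries R p B := by
  induction n generalizing A B with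
  | zero => simp
  | succ n ih =>
    have hX (D : Finset (Fin d)) : X ∣ maximalSeries R p D := X_dvd_maximalSeries (by lia) D
    let φ := Ideal.Quotient.mk (Ideal.span {(X : R⟦X⟧) ^ (n + 1)})
    have hφ (D E : Finset (Fin d)) (hDE : D.card = E.card) :
        φ (maximalSeries R p D) ^ p = φ (maximalSeries R p E) ^ p := by
      rw [← map_pow, ← map_pow, Ideal.Quotient.eq, Ideal.mem_span_singleton]
      exact pow_succ_dvd_pow_sub_pow hp (hX D) (hX E) (ih hDE)
    rcases A.eq_empty_or_nonempty with rfl | hA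
    · rw [Finset.card_eq_zero.1 hAB.symm, sub_self]
      exact dvd_zero _
    have hB : B.Nonempty := Finset.card_pos.1 (hAB ▸ hA.card_pos)
    have hAmax := A.isGreatest_max' hA
    have hBmax := B.isGreatest_max' hB
    rw [← Ideal.mem_span_singleton, ← Ideal.Quotient.eq]
    change φ _ = φ _
    rw [map_maximalSeries_eq_map_pow φ hp hφ hAmax, map_maximalSeries_eq_map_pow φ hp hφ hBmax]
    refine hφ _ _ ?_
    rw [Finset.card_erase_of_mem hAmax.1, Finset.card_erase_of_mem hBmax.1, hAB]

theorem maximalSeries_eq_of_card_eq (hp : 2 ≤ p) {A B : Finset (Fin d)} (hAB : A.card = B.card) :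
    maximalSeries R p A = maximalSeries R p B :=
  eq_of_forall_X_pow_dvd_sub fun n => X_pow_dvd_maximalSeries_sub hp n hAB

theorem maximalSeries_eq_pow (hp : 2 ≤ p) (A : Finset (Fin d)) :
    maximalSeries R p A = maximalSeries R p (∅ : Finset (Fin d)) ^ p ^ A.card := by
  induction A using Finset.induction_on_max with
  | empty => simp
  | insert m A hlt ih =>
    have hm_notMem : m ∉ A := fun h => lt_irrefl m (hlt m h)
    have hm : IsGreatest (insert m A : Finset (Fin d)) m :=
      ⟨Finset.mem_insert_self m A, by
        simpa [upperBounds] using fun j hj => (hlt j hj).le⟩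
    have hstep := map_maximalSeries_eq_map_pow (RingHom.id R⟦X⟧) hp
      (fun D E hDE => by rw [maximalSeries_eq_of_card_eq hp hDE]) hm
    rw [RingHom.id_apply, RingHom.id_apply, Finset.erase_insert hm_notMem] at hstep
    rw [hstep, ih, Finset.card_insert_of_notMem hm_notMem, pow_succ, pow_mul]

theorem sum_powerset_maximalSeries (hp : 2 ≤ p) :
    ∑ A ∈ (Finset.univ : Finset (Fin d)).powerset, (-1) ^ A.card * maximalSeries R p A = X := by
  have hinter (A : Finset (Fin d)) :
      maximalBlockedBy p ∅ ∩ ⋂ j ∈ A, {T | Blocked j T} = maximalBlockedBy p A := by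
    ext T
    simp [maximalBlockedBy]
  have h := sizeSeries_sdiff_biUnion (R := R) (finite_setOf_leavesCount_eq hp)
    (maximalBlockedBy p (∅ : Finset (Fin d))) Finset.univ fun j => {T | Blocked j T}
  rw [maximalBlockedBy_empty_sdiff_biUnion, sizeSeries_singleton, leavesCount, pow_one] at h
  rw [h]
  simp only [hinter, maximalSeries]

theorem sum_choose_mul_maximalSeries_pow (hp : 2 ≤ p) :
    ∑ k ∈ Finset.range (d + 1),
      (-1) ^ k * (d.choose k : R⟦X⟧) * maximalSeries R p (∅ : Finset (Fin d)) ^ p ^ k = X := by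
  set w := maximalSeries R p (∅ : Finset (Fin d))
  calc ∑ k ∈ Finset.range (d + 1), (-1) ^ k * (d.choose k : R⟦X⟧) * w ^ p ^ k
      = ∑ A ∈ (Finset.univ : Finset (Fin d)).powerset, (-1) ^ A.card * w ^ p ^ A.card := by
        rw [Finset.sum_powerset_apply_card fun k => (-1) ^ k * w ^ p ^ k, Finset.card_univ,
          Fintype.card_fin]
        exact Finset.sum_congr rfl fun k _ => by rw [nsmul_eq_mul]; ring
    _ = ∑ A ∈ (Finset.univ : Finset (Fin d)).powerset, (-1) ^ A.card * maximalSeries R p A :=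
        Finset.sum_congr rfl fun A _ => by rw [maximalSeries_eq_pow hp A]
    _ = X := sum_powerset_maximalSeries hp

theorem eq_maximalSeries_empty (hp : p ≠ 0) {w : R⟦X⟧}
    (hw : ∀ n : ℕ, coeff n w =
      if n = 0 then 0
      else (Nat.card {T : LabelledPTree d p //
        T.leavesCount = n ∧ T.IsInterchangeMaximal} : R)) :
    w = maximalSeries R p (∅ : Finset (Fin d)) := by
  ext n
  rw [hw]
  split_ifs with hn
  · rw [hn, coeff_zero_eq_constantCoeff_apply, X_dvd_iff.1 (X_dvd_maximalSeries hp ∅)]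
  have hset : {T ∈ maximalBlockedBy p (∅ : Finset (Fin d)) | T.leavesCount = n} =
      {T | T.leavesCount = n ∧ T.IsInterchangeMaximal} := by
    ext T
    simp [maximalBlockedBy, and_comm]
  rw [maximalSeries, coeff_sizeSeries, hset, ← Nat.card_coe_set_eq]
  rfl

end Series

end LabelledPTree

theorem statement_16_general {R : Type*} [CommRing R] (d p : ℕ) (hp : 2 ≤ p) (w : PowerSeries R)
    (hw : ∀ n : ℕ, PowerSeries.coeff n w =
      if n = 0 then 0
      else (Nat.card {T : LabelledPTree d p //
        T.leavesCount = n ∧ T.IsInterchangeMaximal} : R)) :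
    ∑ k ∈ Finset.range (d + 1),
      (-1 : PowerSeries R) ^ k * (d.choose k : PowerSeries R) * w ^ p ^ k
      = PowerSeries.X := by
  rw [LabelledPTree.eq_maximalSeries_empty (by lia) hw]
  exact LabelledPTree.sum_choose_mul_maximalSeries_pow hp

/-- Fix `d ≥ 1` and `p ≥ 2`, and for `n ≥ 1` let `T⁺_{d,p,n}` be the
(finite) set of interchange maximal trees with `n` leaves.  Then the formal power series
`w = ∑_{n ≥ 1} |T⁺_{d,p,n}| xⁿ ∈ ℚ⟦x⟧` satisfies the functional equation
`∑_{k=0}^{d} (-1)^k C(d,k) w^{p^k} = x`. -/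
theorem statement_16 (d p : ℕ) (hd : 1 ≤ d) (hp : 2 ≤ p)
    (w : PowerSeries ℚ)
    (hw : ∀ n : ℕ, PowerSeries.coeff n w =
      if n = 0 then 0
      else (Nat.card {T : LabelledPTree d p //
        T.leavesCount = n ∧ T.IsInterchangeMaximal} : ℚ)) :
    ∑ k ∈ Finset.range (d + 1),
      (-1 : PowerSeries ℚ) ^ k * (d.choose k : PowerSeries ℚ) * w ^ p ^ k
      = PowerSeries.X := by
  exact statement_16_general d p hp w hw
end
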